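/- arXiv:2206.01391 — 6 statements merged into one kernel-verified Lean document; each statement's English description precedes it below -/
import Mathlib

section
/- Let x ≥ 3.5 be a half-integer (x = m + 1/2 for some positive integer m) and let T ≥ 1/log(3/2). Then the series ∑_{n=2}^∞ (x/n)^{1/log x} · (Λ(n)/(n·log n)) · min{1, 1/(T·|log(x/n)|)} is at most R(x)/T, where R(x) = 40.23·log(log x) + 58.12 + 3.87/log x + 5.22·(log x)/√x − 1.84/√x. -/
open ArithmeticFunction in
theorem sum_moebius_div (n : ℕ) : ∑ d ∈ n.divisors, ((moebius d : ℤ) : ℝ) = if n = 1 then 1 else 0 := by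
  have h := congrArg (fun f : ArithmeticFunction ℤ => f n) moebius_mul_coe_zeta
  simp only [coe_mul_zeta_apply, one_apply] at h
  rw [← Int.cast_sum, h]
  split_ifs <;> simp

/-- squarefree numbers up to `N` -/
def sqf (N : ℕ) : Finset ℕ := (Finset.Icc 1 N).filter Squarefree

noncomputable def selS (N : ℕ) : ℝ := ∑ e ∈ sqf N, (1 : ℝ) / (e.totient : ℝ)

noncomputable def selL (N d : ℕ) : ℝ :=
  (d : ℝ) * ((ArithmeticFunction.moebius d : ℤ) : ℝ) / selS N *
    ∑ e ∈ (sqf N).filter (d ∣ ·), (1 : ℝ) / (e.totient : ℝ)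

theorem mem_sqf {N d : ℕ} : d ∈ sqf N ↔ (1 ≤ d ∧ d ≤ N) ∧ Squarefree d := by
  simp [sqf]

theorem sqf_of_dvd {N d e : ℕ} (h : e ∈ sqf N) (hd : d ∣ e) : d ∈ sqf N := by
  rw [mem_sqf] at *
  obtain ⟨⟨h1, h2⟩, h3⟩ := h
  exact ⟨⟨Nat.pos_of_dvd_of_pos hd h1, (Nat.le_of_dvd h1 hd).trans h2⟩, h3.squarefree_of_dvd hd⟩

theorem selS_pos {N : ℕ} (hN : 1 ≤ N) : 0 < selS N := by
  unfold selS
  apply Finset.sum_pos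
  · intro e he
    have : 0 < e.totient := Nat.totient_pos.mpr (mem_sqf.mp he).1.1
    positivity
  · exact ⟨1, mem_sqf.mpr ⟨⟨le_rfl, hN⟩, squarefree_one⟩⟩

theorem selL_one {N : ℕ} (hN : 1 ≤ N) : selL N 1 = 1 := by
  have := (selS_pos hN).ne'
  unfold selL
  simp only [one_dvd, Finset.filter_true]
  change _ * selS N = 1
  simp [this]

theorem selL_abs_le {N d : ℕ} (hN : 1 ≤ N) (hd : d ∈ sqf N) : |selL N d| ≤ 1 := by
  have hS := selS_pos hN
  have hd' := mem_sqf.mp hd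
  have hd0 : 0 < d := hd'.1.1
  have key : (d : ℝ) * ∑ e ∈ (sqf N).filter (d ∣ ·), (1 : ℝ) / (e.totient : ℝ) ≤ selS N := by
    have h1 : (d : ℝ) = ∑ k ∈ d.divisors, (k.totient : ℝ) := by
      exact_mod_cast (Nat.sum_totient d).symm
    rw [h1, Finset.sum_mul_sum, ← Finset.sum_product']
    unfold selS
    have h2 : ∀ p ∈ d.divisors ×ˢ (sqf N).filter (d ∣ ·),
        (p.1.totient : ℝ) * (1 / (p.2.totient : ℝ)) = 1 / ((p.2 / p.1).totient : ℝ) := by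
      rintro ⟨k, e⟩ hp
      simp only [Finset.mem_product, Nat.mem_divisors, Finset.mem_filter] at hp
      obtain ⟨⟨hk, -⟩, he, hde⟩ := hp
      obtain ⟨f, rfl⟩ := hk.trans hde
      have he' := mem_sqf.mp he
      have hk0 : 0 < k := Nat.pos_of_dvd_of_pos hk hd0
      have hc := (Nat.squarefree_mul_iff.mp he'.2).1
      have hf0 : 0 < f := Nat.pos_of_mul_pos_left he'.1.1
      have a1 : (0:ℝ) < k.totient := by exact_mod_cast Nat.totient_pos.mpr hk0
      have a2 : (0:ℝ) < f.totient := by exact_mod_cast Nat.totient_pos.mpr hf0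
      simp only [Nat.mul_div_cancel_left f hk0, Nat.totient_mul hc]
      push_cast
      field_simp
    rw [Finset.sum_congr rfl h2]
    have hinj : Set.InjOn (fun p : ℕ × ℕ => p.2 / p.1)
        (d.divisors ×ˢ (sqf N).filter (d ∣ ·) : Finset (ℕ × ℕ)) := by
      have hg : ∀ p ∈ (d.divisors ×ˢ (sqf N).filter (d ∣ ·) : Finset (ℕ × ℕ)),
          p.1 * Nat.gcd (p.2 / p.1) d = d ∧ p.1 * (p.2 / p.1) = p.2 := by
        rintro ⟨k, e⟩ hp
        simp only [Finset.mem_product, Nat.mem_divisors, Finset.mem_filter] at hp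
        obtain ⟨⟨hk, -⟩, he, hde⟩ := hp
        have he' := mem_sqf.mp he
        have hk0 : 0 < k := Nat.pos_of_dvd_of_pos hk hd0
        obtain ⟨l, rfl⟩ := hk
        obtain ⟨m, rfl⟩ := hde
        have hc : Nat.Coprime k (l * m) := by
          have := he'.2
          rw [mul_assoc] at this
          exact (Nat.squarefree_mul_iff.mp this).1
        have e1 : k * l * m / k = l * m := by
          rw [mul_assoc, Nat.mul_div_cancel_left _ hk0]
        refine ⟨?_, ?_⟩
        · simp only [e1]
          rw [Nat.gcd_comm, Nat.Coprime.gcd_mul_left_cancel _ hc, Nat.gcd_mul_right_right]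
        · simp only [e1]; ring
      intro p hp q hq hpq
      simp only at hpq
      obtain ⟨p1, p2⟩ := hg p hp
      obtain ⟨q1, q2⟩ := hg q hq
      have hgpos : 0 < Nat.gcd (p.2 / p.1) d := Nat.gcd_pos_of_pos_right _ hd0
      rw [← hpq] at q1 q2
      have : p.1 = q.1 := Nat.eq_of_mul_eq_mul_right hgpos (p1.trans q1.symm)
      refine Prod.ext this ?_
      rw [← p2, ← q2, this]
    rw [← Finset.sum_image (f := fun n => (1:ℝ) / (n.totient : ℝ)) hinj]
    apply Finset.sum_le_sum_of_subset_of_nonneg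
    · intro f hf
      simp only [Finset.mem_image, Finset.mem_product, Nat.mem_divisors, Finset.mem_filter] at hf
      obtain ⟨⟨k, e⟩, ⟨⟨hk, -⟩, he, hde⟩, rfl⟩ := hf
      exact sqf_of_dvd he (Nat.div_dvd_of_dvd (hk.trans hde))
    · intros; positivity
  have hmu : |((ArithmeticFunction.moebius d : ℤ) : ℝ)| ≤ 1 := by
    exact_mod_cast ArithmeticFunction.abs_moebius_le_one
  have hnn : 0 ≤ ∑ e ∈ (sqf N).filter (d ∣ ·), (1 : ℝ) / (e.totient : ℝ) :=
    Finset.sum_nonneg fun _ _ => by positivity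
  unfold selL
  rw [abs_mul, abs_div, abs_mul, abs_of_pos hS, abs_of_nonneg hnn, Nat.abs_cast, div_mul_eq_mul_div,
    div_le_one hS]
  refine le_trans ?_ key
  gcongr
  nlinarith [Nat.cast_nonneg (α := ℝ) d]

theorem sum_mu_between {N e f : ℕ} (hf : f ∈ sqf N) :
    ∑ d ∈ (sqf N).filter (e ∣ ·), (if d ∣ f then ((ArithmeticFunction.moebius d : ℤ) : ℝ) else 0)
      = if e = f then ((ArithmeticFunction.moebius e : ℤ) : ℝ) else 0 := by
  have hf' := mem_sqf.mp hf
  rw [← Finset.sum_filter]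
  by_cases hef : e ∣ f
  · obtain ⟨k, rfl⟩ := hef
    have he0 : 0 < e := Nat.pos_of_mul_pos_right hf'.1.1
    have hk0 : 0 < k := Nat.pos_of_mul_pos_left hf'.1.1
    have hs : ((sqf N).filter (e ∣ ·)).filter (· ∣ e * k) = k.divisors.image (e * ·) := by
      ext d
      simp only [Finset.mem_filter, Finset.mem_image, Nat.mem_divisors]
      constructor
      · rintro ⟨⟨_, c, rfl⟩, h⟩
        exact ⟨c, ⟨Nat.dvd_of_mul_dvd_mul_left he0 h, hk0.ne'⟩, rfl⟩
      · rintro ⟨c, ⟨h, _⟩, rfl⟩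
        have := mul_dvd_mul_left e h
        exact ⟨⟨sqf_of_dvd hf this, dvd_mul_right _ _⟩, this⟩
    rw [hs, Finset.sum_image (fun a _ b _ h => Nat.eq_of_mul_eq_mul_left he0 h)]
    have hc := (Nat.squarefree_mul_iff.mp hf'.2).1
    have h3 : ∀ c ∈ k.divisors, ((ArithmeticFunction.moebius (e * c) : ℤ) : ℝ)
        = ((ArithmeticFunction.moebius e : ℤ) : ℝ) * ((ArithmeticFunction.moebius c : ℤ) : ℝ) := by
      intro c hcd
      rw [ArithmeticFunction.isMultiplicative_moebius.map_mul_of_coprime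
        (hc.coprime_dvd_right (Nat.dvd_of_mem_divisors hcd))]
      push_cast; rfl
    rw [Finset.sum_congr rfl h3, ← Finset.mul_sum, sum_moebius_div]
    by_cases hk1 : k = 1
    · simp [hk1]
    · have : e ≠ e * k := by
        intro h
        apply hk1
        exact Nat.eq_of_mul_eq_mul_left he0 (by simpa using h.symm)
      simp [hk1, this]
  · have : e ≠ f := fun h => hef (h ▸ dvd_rfl)
    rw [if_neg this]
    apply Finset.sum_eq_zero
    intro d hd
    simp only [Finset.mem_filter] at hd
    exact absurd (hd.1.2.trans hd.2) hef

theorem selL_y {N e : ℕ} (he : e ∈ sqf N) :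
    ∑ d ∈ (sqf N).filter (e ∣ ·), selL N d / d
      = ((ArithmeticFunction.moebius e : ℤ) : ℝ) / (e.totient * selS N) := by
  have h1 : ∀ d ∈ (sqf N).filter (e ∣ ·), selL N d / d =
      ∑ f ∈ sqf N, (1 / (f.totient * selS N)) *
        (if d ∣ f then ((ArithmeticFunction.moebius d : ℤ) : ℝ) else 0) := by
    intro d hd
    have hd0 : (0:ℝ) < d := by
      exact_mod_cast (mem_sqf.mp (Finset.mem_filter.mp hd).1).1.1
    unfold selL
    rw [Finset.sum_filter, Finset.mul_sum, Finset.sum_div]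
    apply Finset.sum_congr rfl
    intro f _
    split_ifs
    · field_simp
    · simp
  rw [Finset.sum_congr rfl h1, Finset.sum_comm]
  have h2 : ∀ f ∈ sqf N, ∑ d ∈ (sqf N).filter (e ∣ ·), (1 / (f.totient * selS N)) *
        (if d ∣ f then ((ArithmeticFunction.moebius d : ℤ) : ℝ) else 0)
      = if e = f then ((ArithmeticFunction.moebius e : ℤ) : ℝ) / (e.totient * selS N) else 0 := by
    intro f hf
    rw [← Finset.mul_sum, sum_mu_between hf]
    split_ifs with h
    · subst h; ring
    · simp
  rw [Finset.sum_congr rfl h2]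
  simp [he]

theorem selL_quad {N : ℕ} (hN : 1 ≤ N) :
    ∑ a ∈ sqf N, ∑ b ∈ sqf N, selL N a * selL N b / (Nat.lcm a b : ℝ) = 1 / selS N := by
  have hS := selS_pos hN
  have h1 : ∀ a ∈ sqf N, ∀ b ∈ sqf N, selL N a * selL N b / (Nat.lcm a b : ℝ) =
      ∑ e ∈ sqf N, (e.totient : ℝ) * ((if e ∣ a then selL N a / a else 0) *
        (if e ∣ b then selL N b / b else 0)) := by
    intro a ha b hb
    have ha0 : 0 < a := (mem_sqf.mp ha).1.1
    have hb0 : 0 < b := (mem_sqf.mp hb).1.1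
    have hg : ((Nat.gcd a b : ℕ) : ℝ) = ∑ e ∈ sqf N, (if e ∣ a ∧ e ∣ b then (e.totient : ℝ) else 0) := by
      rw [← Finset.sum_filter]
      have : (sqf N).filter (fun e => e ∣ a ∧ e ∣ b) = (Nat.gcd a b).divisors := by
        ext e
        simp only [Finset.mem_filter, Nat.mem_divisors, Nat.dvd_gcd_iff]
        constructor
        · rintro ⟨_, h⟩
          exact ⟨h, (Nat.gcd_pos_of_pos_left _ ha0).ne'⟩
        · rintro ⟨h, _⟩
          exact ⟨sqf_of_dvd ha h.1, h⟩
      rw [this]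
      exact_mod_cast (Nat.sum_totient _).symm
    have hl : ((Nat.gcd a b : ℕ) : ℝ) * (Nat.lcm a b : ℝ) = a * b := by
      exact_mod_cast Nat.gcd_mul_lcm a b
    have hl0 : (0:ℝ) < (Nat.lcm a b : ℝ) := by exact_mod_cast Nat.lcm_pos ha0 hb0
    have ha0' : (0:ℝ) < a := by exact_mod_cast ha0
    have hb0' : (0:ℝ) < b := by exact_mod_cast hb0
    have : selL N a * selL N b / (Nat.lcm a b : ℝ) =
        ((Nat.gcd a b : ℕ) : ℝ) * (selL N a / a * (selL N b / b)) := by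
      field_simp
      linear_combination (-(selL N a * selL N b)) * hl
    rw [this, hg, Finset.sum_mul]
    apply Finset.sum_congr rfl
    intro e _
    by_cases h1 : e ∣ a <;> by_cases h2 : e ∣ b <;> simp [h1, h2]
  rw [Finset.sum_congr rfl fun a ha => Finset.sum_congr rfl (h1 a ha)]
  have h2 : ∑ a ∈ sqf N, ∑ b ∈ sqf N, ∑ e ∈ sqf N, (e.totient : ℝ) * ((if e ∣ a then selL N a / a else 0) *
        (if e ∣ b then selL N b / b else 0)) =
      ∑ e ∈ sqf N, (e.totient : ℝ) * (∑ d ∈ (sqf N).filter (e ∣ ·), selL N d / d) ^ 2 := by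
    calc _ = ∑ a ∈ sqf N, ∑ e ∈ sqf N, ∑ b ∈ sqf N, (e.totient : ℝ) * ((if e ∣ a then selL N a / a else 0) *
        (if e ∣ b then selL N b / b else 0)) :=
          Finset.sum_congr rfl fun a _ => Finset.sum_comm
      _ = _ := by
        rw [Finset.sum_comm]
        apply Finset.sum_congr rfl
        intro e _
        rw [sq, Finset.sum_filter, Finset.sum_mul_sum, Finset.mul_sum]
        apply Finset.sum_congr rfl
        intro a _
        rw [Finset.mul_sum]
  rw [h2]
  have h3 : ∀ e ∈ sqf N, (e.totient : ℝ) * (∑ d ∈ (sqf N).filter (e ∣ ·), selL N d / d) ^ 2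
      = (1 / (e.totient : ℝ)) * (1 / selS N ^ 2) := by
    intro e he
    rw [selL_y he]
    have h4 : ((ArithmeticFunction.moebius e : ℤ) : ℝ) ^ 2 = 1 := by
      exact_mod_cast ArithmeticFunction.moebius_sq_eq_one_of_squarefree (mem_sqf.mp he).2
    have a1 : (0:ℝ) < e.totient := by exact_mod_cast Nat.totient_pos.mpr (mem_sqf.mp he).1.1
    rw [div_pow, h4]
    field_simp
  rw [Finset.sum_congr rfl h3, ← Finset.sum_mul]
  change selS N * _ = _
  field_simp

theorem card_mult (u L m : ℕ) (hm : 0 < m) :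
    |(((Finset.Ioc u (u + L)).filter (m ∣ ·)).card : ℝ) - L / m| ≤ 1 := by
  have h1 : ((Finset.Ioc 0 (u+L)).filter (m ∣ ·)).card =
      ((Finset.Ioc 0 u).filter (m ∣ ·)).card + ((Finset.Ioc u (u + L)).filter (m ∣ ·)).card := by
    rw [← Finset.card_union_of_disjoint, ← Finset.filter_union,
      Finset.Ioc_union_Ioc_eq_Ioc (by omega) (by omega)]
    apply Finset.disjoint_filter_filter
    rw [Finset.disjoint_left]
    intro a; simp; omega
  rw [Nat.Ioc_filter_dvd_card_eq_div, Nat.Ioc_filter_dvd_card_eq_div] at h1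
  set c := ((Finset.Ioc u (u + L)).filter (m ∣ ·)).card
  have hm' : (0:ℝ) < m := by exact_mod_cast hm
  have e1 := Nat.div_add_mod (u+L) m
  have e2 := Nat.div_add_mod u m
  have l1 := Nat.mod_lt (u+L) hm
  have l2 := Nat.mod_lt u hm
  have e3 : m * c + (u+L) % m = L + u % m := by
    rw [h1] at e1; nlinarith
  have e3' : (m:ℝ) * c + ((u+L) % m : ℕ) = L + (u % m : ℕ) := by exact_mod_cast e3
  have l1' : (((u+L) % m : ℕ):ℝ) < m := by exact_mod_cast l1
  have l2' : ((u % m : ℕ):ℝ) < m := by exact_mod_cast l2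
  have n1 : (0:ℝ) ≤ ((u+L) % m : ℕ) := Nat.cast_nonneg _
  have n2 : (0:ℝ) ≤ (u % m : ℕ) := Nat.cast_nonneg _
  have : (c:ℝ) - L / m = ((u % m : ℕ) - ((u+L) % m : ℕ)) / m := by
    field_simp; linarith
  rw [this, abs_le, div_le_one hm', le_div_iff₀ hm']
  constructor <;> linarith

theorem selberg_count (u L N : ℕ) (hN : 1 ≤ N) (A : Finset ℕ) (hA : A ⊆ Finset.Ioc u (u + L))
    (hA' : ∀ n ∈ A, ∀ p, p.Prime → p ≤ N → ¬ p ∣ n) :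
    (A.card : ℝ)
      ≤ L / selS N + (N : ℝ) ^ 2 := by
  have h1mem : 1 ∈ sqf N := mem_sqf.mpr ⟨⟨le_rfl, hN⟩, squarefree_one⟩
  have step1 : (A.card : ℝ)
      ≤ ∑ n ∈ Finset.Ioc u (u + L), (∑ d ∈ sqf N, if d ∣ n then selL N d else 0) ^ 2 := by
    refine le_trans ?_ (Finset.sum_le_sum_of_subset_of_nonneg hA fun _ _ _ => sq_nonneg _)
    rw [Finset.card_eq_sum_ones]
    push_cast
    apply Finset.sum_le_sum
    intro n hn
    have h := hA' n hn
    rw [Finset.sum_eq_single 1]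
    · simp [selL_one hN]
    · intro d hd hd1
      have hd' := mem_sqf.mp hd
      rw [if_neg]
      intro hdn
      exact h d.minFac (Nat.minFac_prime hd1) ((Nat.minFac_le hd'.1.1).trans hd'.1.2)
        ((Nat.minFac_dvd d).trans hdn)
    · intro h; exact absurd h1mem h
  have step2 : ∑ n ∈ Finset.Ioc u (u + L), (∑ d ∈ sqf N, if d ∣ n then selL N d else 0) ^ 2
      = ∑ a ∈ sqf N, ∑ b ∈ sqf N, selL N a * selL N b *
        (((Finset.Ioc u (u + L)).filter (Nat.lcm a b ∣ ·)).card : ℝ) := by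
    simp_rw [sq, Finset.sum_mul_sum]
    rw [Finset.sum_comm]
    apply Finset.sum_congr rfl
    intro a _
    rw [Finset.sum_comm]
    apply Finset.sum_congr rfl
    intro b _
    rw [Finset.card_eq_sum_ones, Finset.sum_filter]
    push_cast
    rw [Finset.mul_sum]
    apply Finset.sum_congr rfl
    intro n _
    by_cases h1 : a ∣ n <;> by_cases h2 : b ∣ n <;> simp [h1, h2, Nat.lcm_dvd_iff]
  have step3 : ∑ a ∈ sqf N, ∑ b ∈ sqf N, selL N a * selL N b *
        (((Finset.Ioc u (u + L)).filter (Nat.lcm a b ∣ ·)).card : ℝ)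
      ≤ ∑ a ∈ sqf N, ∑ b ∈ sqf N, (L * (selL N a * selL N b / (Nat.lcm a b : ℝ)) + 1) := by
    apply Finset.sum_le_sum
    intro a ha
    apply Finset.sum_le_sum
    intro b hb
    have hc := card_mult u L (Nat.lcm a b) (Nat.lcm_pos (mem_sqf.mp ha).1.1 (mem_sqf.mp hb).1.1)
    set c : ℝ := (((Finset.Ioc u (u + L)).filter (Nat.lcm a b ∣ ·)).card : ℝ)
    have hab : |selL N a * selL N b| ≤ 1 := by
      rw [abs_mul]
      exact mul_le_one₀ (selL_abs_le hN ha) (abs_nonneg _) (selL_abs_le hN hb)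
    have h3 : selL N a * selL N b * (c - L / (Nat.lcm a b : ℝ)) ≤ 1 := by
      refine (le_abs_self _).trans ?_
      rw [abs_mul]
      exact mul_le_one₀ hab (abs_nonneg _) hc
    have h4 : selL N a * selL N b * c = selL N a * selL N b * (c - L / (Nat.lcm a b : ℝ))
      + L * (selL N a * selL N b / (Nat.lcm a b : ℝ)) := by ring
    linarith
  have hcard : ((sqf N).card : ℝ) ≤ N := by
    have : (sqf N).card ≤ (Finset.Icc 1 N).card := Finset.card_filter_le _ _
    rw [Nat.card_Icc] at this
    exact_mod_cast this
  have step4 : ∑ a ∈ sqf N, ∑ b ∈ sqf N, (L * (selL N a * selL N b / (Nat.lcm a b : ℝ)) + 1)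
      = L / selS N + ((sqf N).card : ℝ) ^ 2 := by
    simp_rw [Finset.sum_add_distrib, ← Finset.mul_sum]
    rw [selL_quad hN]
    simp; ring
  rw [step2] at step1
  rw [step4] at step3
  have : ((sqf N).card : ℝ) ^ 2 ≤ (N:ℝ)^2 := by gcongr
  linarith

theorem selS_ge (N : ℕ) : Real.log (N + 1) / 2 ≤ selS N := by
  have hh := log_add_one_le_harmonic N
  have h0 : ((harmonic N : ℚ) : ℝ) = ∑ n ∈ Finset.Icc 1 N, (1:ℝ) / n := by
    rw [harmonic_eq_sum_Icc]; push_cast; simp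
  have h1 : ∑ n ∈ Finset.Icc 1 N, (1:ℝ) / n ≤
      ∑ p ∈ sqf N ×ˢ Finset.Icc 1 N, (1:ℝ) / p.1 * (1 / (p.2:ℝ) ^ 2) := by
    choose a b hab hsq using Nat.sq_mul_squarefree
    have hinj : Set.InjOn (fun n => (a n, b n)) (Finset.Icc 1 N) := by
      intro n _ m _ h
      simp only [Prod.mk.injEq] at h
      rw [← hab n, ← hab m, h.1, h.2]
    have hc : ∀ n ∈ Finset.Icc 1 N, (1:ℝ) / n = 1 / (a n : ℝ) * (1 / (b n : ℝ) ^ 2) := by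
      intro n _
      conv_lhs => rw [← hab n]
      push_cast
      rw [one_div_mul_one_div, mul_comm]
    rw [Finset.sum_congr rfl hc,
      ← Finset.sum_image (f := fun p : ℕ × ℕ => (1:ℝ) / p.1 * (1 / (p.2:ℝ) ^ 2)) hinj]
    apply Finset.sum_le_sum_of_subset_of_nonneg
    · intro p hp
      simp only [Finset.mem_image, Finset.mem_Icc] at hp
      obtain ⟨n, ⟨hn1, hn2⟩, rfl⟩ := hp
      have hn := hab n
      have ha0 : 0 < a n := Nat.pos_of_ne_zero fun h => by rw [h] at hn; omega
      have hb0 : 0 < b n := Nat.pos_of_ne_zero fun h => by rw [h] at hn; simp at hn; omega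
      simp only [Finset.mem_product, mem_sqf, Finset.mem_Icc]
      refine ⟨⟨⟨ha0, ?_⟩, hsq n⟩, hb0, ?_⟩ <;> nlinarith [Nat.mul_le_mul hb0 hb0, Nat.mul_le_mul (Nat.mul_le_mul hb0 hb0) ha0, Nat.le_mul_of_pos_left (a n) (pow_pos hb0 2), Nat.le_mul_of_pos_right (b n ^ 2) ha0]
    · intros; positivity
  have h2 : ∑ k ∈ Finset.Icc 1 N, 1 / (k:ℝ) ^ 2 ≤ 2 := by
    rcases Nat.eq_zero_or_pos N with rfl | hN
    · simp
    · rw [← Finset.add_sum_Ioc_eq_sum_Icc hN]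
      have := sum_Ioc_inv_sq_le_sub (α := ℝ) one_ne_zero hN
      have h5 : (0:ℝ) ≤ (N:ℝ)⁻¹ := by positivity
      simp only [one_div]
      simp only [Nat.cast_one, inv_one, one_pow] at *
      linarith
  have h3 : ∑ e ∈ sqf N, (1:ℝ) / e ≤ selS N := by
    apply Finset.sum_le_sum
    intro e he
    have a1 : (0:ℝ) < e.totient := by exact_mod_cast Nat.totient_pos.mpr (mem_sqf.mp he).1.1
    apply one_div_le_one_div_of_le a1
    exact_mod_cast Nat.totient_le e
  rw [Finset.sum_product] at h1
  simp only at h1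
  rw [← Finset.sum_mul_sum] at h1
  have h4 : 0 ≤ ∑ e ∈ sqf N, (1:ℝ) / e := Finset.sum_nonneg fun _ _ => by positivity
  push_cast at hh
  nlinarith

theorem pp_count (u L N : ℕ) (hN : 1 ≤ N) (A : Finset ℕ) (hA : A ⊆ Finset.Ioc u (u + L))
    (hpp : ∀ n ∈ A, IsPrimePow n) (hr : ∀ n ∈ A, ∀ m ∈ A, n < 2 * m) :
    (A.card : ℝ) ≤ L / selS N + (N : ℝ) ^ 2 + N := by
  have h1 : ((A.filter (fun n => ¬ n.minFac ≤ N)).card : ℝ) ≤ L / selS N + (N : ℝ) ^ 2 := by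
    apply selberg_count u L N hN _ ((Finset.filter_subset _ _).trans hA)
    intro n hn p hp hpN hpn
    exact (Finset.mem_filter.mp hn).2 ((Nat.minFac_le_of_dvd hp.two_le hpn).trans hpN)
  have h2 : (A.filter (fun n => n.minFac ≤ N)).card ≤ (Finset.Icc 1 N).card := by
    apply Finset.card_le_card_of_injOn Nat.minFac
    · intro n hn
      have hn' := Finset.mem_filter.mp hn
      simp only [Finset.coe_Icc, Set.mem_Icc]
      exact ⟨Nat.minFac_pos n, hn'.2⟩
    · intro n hn m hm h
      have hn' := (Finset.mem_filter.mp hn).1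
      have hm' := (Finset.mem_filter.mp hm).1
      have en := (hpp n hn').minFac_pow_factorization_eq
      have em := (hpp m hm').minFac_pow_factorization_eq
      have r1 := hr n hn' m hm'
      have r2 := hr m hm' n hn'
      have hp : 2 ≤ n.minFac := (Nat.minFac_prime (hpp n hn').ne_one).two_le
      rw [← h] at em
      set p := n.minFac
      set i := n.factorization p
      set j := m.factorization p
      have key : ∀ i j : ℕ, i < j → 2 * p ^ i ≤ p ^ j := by
        intro i j hij
        calc 2 * p ^ i ≤ p * p ^ i := Nat.mul_le_mul_right _ hp
          _ = p ^ (i+1) := by ring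
          _ ≤ p ^ j := Nat.pow_le_pow_right (by omega) hij
      rcases lt_trichotomy i j with hij | hij | hij
      · have := key i j hij; omega
      · rw [← en, ← em, hij]
      · have := key j i hij; omega
  rw [Nat.card_Icc, Nat.add_sub_cancel] at h2
  have h3 : A.card = (A.filter (fun n => n.minFac ≤ N)).card + (A.filter (fun n => ¬ n.minFac ≤ N)).card :=
    (Finset.card_filter_add_card_filter_not _).symm
  have h2' : ((A.filter (fun n => n.minFac ≤ N)).card : ℝ) ≤ N := by exact_mod_cast h2
  rw [h3]; push_cast; linarith

noncomputable def shellc (m : ℕ) : ℝ := 3 / m + 2 * (1 / 2) ^ m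

theorem shell_count (u k : ℕ) (A : Finset ℕ) (hA : A ⊆ Finset.Ioc u (u + 2 ^ k))
    (hpp : ∀ n ∈ A, IsPrimePow n) (hr : ∀ n ∈ A, ∀ m ∈ A, n < 2 * m) :
    (A.card : ℝ) / 2 ^ k ≤ shellc (k / 3) := by
  unfold shellc
  rw [div_le_iff₀ (by positivity)]
  set m := k / 3 with hm
  rcases Nat.eq_zero_or_pos m with h0 | hpos
  · have := Finset.card_le_card hA
    rw [Nat.card_Ioc, Nat.add_sub_cancel_left] at this
    have h' : (A.card : ℝ) ≤ 2 ^ k := by exact_mod_cast this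
    rw [h0]
    simp
    nlinarith [pow_pos (two_pos (α := ℝ)) k]
  · have hN : 1 ≤ 2 ^ m := Nat.one_le_two_pow
    have h1 := pp_count u (2 ^ k) (2 ^ m) hN A hA hpp hr
    have hS := selS_ge (2 ^ m)
    have hl : (m : ℝ) * Real.log 2 ≤ Real.log (((2 ^ m : ℕ) : ℝ) + 1) := by
      rw [← Real.log_pow]
      apply Real.log_le_log (by positivity)
      push_cast; linarith
    have hl2 := Real.log_two_gt_d9
    have hm' : (0:ℝ) < m := by exact_mod_cast hpos
    have hS' : (m : ℝ) / 3 ≤ selS (2 ^ m) := by nlinarith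
    have h2 : ((2 ^ k : ℕ) : ℝ) / selS (2 ^ m) ≤ 2 ^ k * (3 / m) := by
      push_cast
      rw [div_eq_mul_inv]
      gcongr
      rw [← inv_div]
      exact inv_anti₀ (by positivity) hS'
    have h3 : ((2 ^ m : ℕ) : ℝ) ^ 2 + ((2 ^ m : ℕ) : ℝ) ≤ 2 * (1/2) ^ m * 2 ^ k := by
      push_cast
      have hk : 3 * m ≤ k := by omega
      have e1 : (2:ℝ) ^ (3 * m) ≤ 2 ^ k := pow_le_pow_right₀ (by norm_num) hk
      have e2 : (1:ℝ) ≤ 2 ^ m := one_le_pow₀ (by norm_num)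
      have e3 : (1/2 : ℝ) ^ m * 2 ^ (3 * m) = (2 ^ m) ^ 2 := by
        rw [pow_mul, ← mul_pow, ← pow_mul, mul_comm m 2, pow_mul]
        norm_num
      have e4 : (1/2 : ℝ) ^ m * 2 ^ (3 * m) ≤ (1/2 : ℝ) ^ m * 2 ^ k := by gcongr
      nlinarith
    linarith

theorem sum_shellc (M : ℕ) :
    ∑ k ∈ Finset.range (M + 1), shellc (k / 3) ≤ 9 * (harmonic (M / 3) : ℝ) + 12 := by
  have h1 : ∀ q : ℕ, ∑ k ∈ Finset.range (3 * q), shellc (k / 3) = 3 * ∑ m ∈ Finset.range q, shellc m := by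
    intro q
    induction q with
    | zero => simp
    | succ q ih =>
      rw [show 3 * (q + 1) = 3 * q + 1 + 1 + 1 by ring]
      rw [Finset.sum_range_succ, Finset.sum_range_succ, Finset.sum_range_succ, ih,
        Finset.sum_range_succ _ q]
      rw [show (3 * q + 1 + 1) / 3 = q by omega, show (3 * q + 1) / 3 = q by omega,
        show (3 * q) / 3 = q by omega]
      ring
  have h2 : ∀ q : ℕ, ∑ m ∈ Finset.range (q + 1), shellc m = 3 * (harmonic q : ℝ) + (4 - 2 * (1/2) ^ q) := by
    intro q
    induction q with
    | zero => simp [shellc]; norm_num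
    | succ q ih =>
      rw [Finset.sum_range_succ, ih, harmonic_succ]
      unfold shellc
      push_cast
      rw [pow_succ]
      field_simp
      ring
  have hnn : ∀ m, 0 ≤ shellc m := fun m => by unfold shellc; positivity
  calc ∑ k ∈ Finset.range (M + 1), shellc (k / 3)
      ≤ ∑ k ∈ Finset.range (3 * (M / 3 + 1)), shellc (k / 3) := by
        apply Finset.sum_le_sum_of_subset_of_nonneg
        · intro k; simp only [Finset.mem_range]; omega
        · intros; exact hnn _
    _ = 3 * (3 * (harmonic (M / 3) : ℝ) + (4 - 2 * (1/2) ^ (M / 3))) := by rw [h1, h2]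
    _ ≤ _ := by
      have : (0:ℝ) ≤ (1/2) ^ (M / 3) := by positivity
      linarith

theorem dyadic_sum (B : Finset ℕ) (j : ℕ → ℕ) (M : ℕ) (hj : ∀ n ∈ B, j n < 2 ^ (M + 1))
    (h0 : (B.filter (fun n => j n = 0)).card ≤ 1)
    (hk : ∀ k, ((B.filter (fun n => j n ≠ 0 ∧ Nat.log 2 (j n) = k)).card : ℝ) / 2 ^ k ≤ shellc (k / 3)) :
    ∑ n ∈ B, 1 / ((j n : ℝ) + 1 / 2) ≤ 9 * (harmonic (M / 3) : ℝ) + 14 := by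
  rw [← Finset.sum_filter_add_sum_filter_not B (fun n => j n = 0)]
  have h1 : ∑ n ∈ B.filter (fun n => j n = 0), 1 / ((j n : ℝ) + 1 / 2) ≤ 2 := by
    have : ∀ n ∈ B.filter (fun n => j n = 0), 1 / ((j n : ℝ) + 1 / 2) = 2 := by
      intro n hn
      rw [(Finset.mem_filter.mp hn).2]; norm_num
    rw [Finset.sum_congr rfl this, Finset.sum_const, nsmul_eq_mul]
    have : ((B.filter (fun n => j n = 0)).card : ℝ) ≤ 1 := by exact_mod_cast h0
    linarith
  have h2 : ∑ n ∈ B.filter (fun n => ¬ j n = 0), 1 / ((j n : ℝ) + 1 / 2) ≤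
      ∑ k ∈ Finset.range (M + 1), shellc (k / 3) := by
    rw [← Finset.sum_fiberwise_of_maps_to (s := B.filter (fun n => ¬ j n = 0))
      (t := Finset.range (M + 1)) (g := fun n => Nat.log 2 (j n))]
    · apply Finset.sum_le_sum
      intro k _
      refine le_trans ?_ (hk k)
      rw [Finset.filter_filter, div_eq_mul_inv _ ((2:ℝ) ^ k), ← nsmul_eq_mul, ← Finset.sum_const]
      apply Finset.sum_le_sum
      intro n hn
      obtain ⟨_, hn0, hnk⟩ := Finset.mem_filter.mp hn
      have := Nat.pow_log_le_self 2 hn0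
      rw [hnk] at this
      have h' : (2:ℝ) ^ k ≤ j n := by exact_mod_cast this
      rw [one_div]
      apply inv_anti₀ (by positivity)
      linarith
    · intro n hn
      obtain ⟨hnB, hn0⟩ := Finset.mem_filter.mp hn
      rw [Finset.mem_range]
      exact Nat.log_lt_of_lt_pow hn0 (hj n hnB)
  have := sum_shellc M
  linarith

theorem right_sum (a : ℕ) (B : Finset ℕ) (hpp : ∀ n ∈ B, IsPrimePow n)
    (hB : ∀ n ∈ B, a < n ∧ n < 2 * a + 1) :
    ∑ n ∈ B, 1 / ((n : ℝ) - (a + 1 / 2)) ≤ 9 * (harmonic (Nat.log 2 a / 3) : ℝ) + 14 := by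
  have hj : ∀ n ∈ B, 1 / ((n : ℝ) - (a + 1 / 2)) = 1 / (((n - (a + 1) : ℕ) : ℝ) + 1 / 2) := by
    intro n hn
    have := hB n hn
    rw [Nat.cast_sub (by omega)]
    push_cast; ring_nf
  rw [Finset.sum_congr rfl hj]
  have hlt : a < 2 ^ (Nat.log 2 a + 1) := Nat.lt_pow_succ_log_self (by norm_num) a
  apply dyadic_sum B (fun n => n - (a + 1))
  · intro n hn
    have := hB n hn
    omega
  · rw [Finset.card_le_one]
    intro n hn m hm
    rw [Finset.mem_filter] at hn hm
    have := hB n hn.1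
    have := hB m hm.1
    omega
  · intro k
    apply shell_count (a + 2 ^ k) k
    · intro n hn
      obtain ⟨hnB, hn0, hnk⟩ := Finset.mem_filter.mp hn
      have h1 := Nat.pow_log_le_self 2 hn0
      have h2 := Nat.lt_pow_succ_log_self (b := 2) (by norm_num) (n - (a + 1))
      rw [hnk] at h1 h2
      have := hB n hnB
      rw [pow_succ] at h2
      rw [Finset.mem_Ioc]; omega
    · intro n hn; exact hpp n (Finset.mem_filter.mp hn).1
    · intro n hn m hm
      have := hB n (Finset.mem_filter.mp hn).1
      have := hB m (Finset.mem_filter.mp hm).1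
      omega

theorem left_sum (a : ℕ) (B : Finset ℕ) (hpp : ∀ n ∈ B, IsPrimePow n)
    (hB : ∀ n ∈ B, n ≤ a ∧ a < 2 * n) :
    ∑ n ∈ B, 1 / ((a + 1 / 2) - (n : ℝ)) ≤ 9 * (harmonic (Nat.log 2 a / 3) : ℝ) + 14 := by
  have hj : ∀ n ∈ B, 1 / ((a + 1 / 2) - (n : ℝ)) = 1 / (((a - n : ℕ) : ℝ) + 1 / 2) := by
    intro n hn
    have := hB n hn
    rw [Nat.cast_sub (by omega)]
    ring_nf
  rw [Finset.sum_congr rfl hj]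
  have hlt : a < 2 ^ (Nat.log 2 a + 1) := Nat.lt_pow_succ_log_self (by norm_num) a
  apply dyadic_sum B (fun n => a - n)
  · intro n hn
    have := hB n hn
    omega
  · rw [Finset.card_le_one]
    intro n hn m hm
    rw [Finset.mem_filter] at hn hm
    have := hB n hn.1
    have := hB m hm.1
    omega
  · intro k
    by_cases hbig : 2 ^ (k + 1) ≤ a
    · apply shell_count (a - 2 ^ (k + 1)) k
      · intro n hn
        obtain ⟨hnB, hn0, hnk⟩ := Finset.mem_filter.mp hn
        have h1 := Nat.pow_log_le_self 2 hn0
        have h2 := Nat.lt_pow_succ_log_self (b := 2) (by norm_num) (a - n)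
        rw [hnk] at h1 h2
        have := hB n hnB
        rw [pow_succ] at *
        rw [Finset.mem_Ioc]; omega
      · intro n hn; exact hpp n (Finset.mem_filter.mp hn).1
      · intro n hn m hm
        have := hB n (Finset.mem_filter.mp hn).1
        have := hB m (Finset.mem_filter.mp hm).1
        omega
    · have : B.filter (fun n => a - n ≠ 0 ∧ Nat.log 2 (a - n) = k) = ∅ := by
        rw [Finset.filter_eq_empty_iff]
        rintro n hn ⟨hn0, hnk⟩
        have h1 := Nat.pow_log_le_self 2 hn0
        rw [hnk] at h1
        have := hB n hn
        rw [pow_succ] at *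
        omega
      rw [this]
      simp
      unfold shellc; positivity

theorem zeta_le (s : ℝ) (hs : 1 < s) : ∑' n : ℕ, 1 / ((n : ℝ)) ^ s ≤ 1 + 1 / (s - 1) := by
  have hs0 : 0 < s - 1 := by linarith
  apply Real.tsum_le_of_sum_range_le
  · intro n; positivity
  have key : ∀ n : ℕ, ∑ i ∈ Finset.range (n + 2), 1 / ((i : ℝ)) ^ s
      ≤ 1 + 1 / (s - 1) - 1 / (s - 1) * (1 / ((n : ℝ) + 1) ^ (s - 1)) := by
    intro n
    induction n with
    | zero =>
      simp [Finset.sum_range_succ, Real.zero_rpow (by linarith : s ≠ 0)]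
    | succ n ih =>
      rw [Finset.sum_range_succ]
      have hstep : 1 / (((n + 2 : ℕ) : ℝ)) ^ s ≤
          1 / (s - 1) * (1 / ((n : ℝ) + 1) ^ (s - 1)) - 1 / (s - 1) * (1 / ((n : ℝ) + 2) ^ (s - 1)) := by
        have hn1 : (0:ℝ) < (n:ℝ) + 1 := by positivity
        have hn2 : (0:ℝ) < (n:ℝ) + 2 := by positivity
        have hb : 1 + (s - 1) * (1 / ((n:ℝ) + 2)) ≤ (((n:ℝ) + 2) / (n + 1)) ^ (s - 1) := by
          have e1 : (((n:ℝ) + 2) / (n + 1)) ^ (s - 1) = Real.exp (Real.log (((n:ℝ) + 2) / (n + 1)) * (s - 1)) :=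
            Real.rpow_def_of_pos (by positivity) _
          have e2 := Real.one_sub_inv_le_log_of_pos (x := ((n:ℝ) + 2) / (n + 1)) (by positivity)
          have e3 : 1 - (((n:ℝ) + 2) / (n + 1))⁻¹ = 1 / ((n:ℝ) + 2) := by
            field_simp; ring
          rw [e3] at e2
          have e4 := Real.add_one_le_exp (Real.log (((n:ℝ) + 2) / (n + 1)) * (s - 1))
          rw [e1]
          nlinarith
        rw [Real.div_rpow hn2.le hn1.le] at hb
        have p1 : 0 < ((n:ℝ) + 1) ^ (s - 1) := Real.rpow_pos_of_pos hn1 _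
        have p2 : 0 < ((n:ℝ) + 2) ^ (s - 1) := Real.rpow_pos_of_pos hn2 _
        have e5 : ((n:ℝ) + 2) ^ s = ((n:ℝ) + 2) ^ (s - 1) * ((n:ℝ) + 2) := by
          rw [← Real.rpow_add_one hn2.ne']; ring_nf
        push_cast
        rw [e5]
        set P := ((n:ℝ) + 1) ^ (s - 1)
        set Q := ((n:ℝ) + 2) ^ (s - 1)
        have : 1 / (Q * ((n:ℝ) + 2)) = 1 / (s - 1) * (1 / Q) * ((s - 1) * (1 / ((n:ℝ) + 2))) := by
          field_simp
        rw [this]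
        have : 1 / (s - 1) * (1 / P) - 1 / (s - 1) * (1 / Q) = 1 / (s - 1) * (1 / Q) * (Q / P - 1) := by
          field_simp
        rw [this]
        apply mul_le_mul_of_nonneg_left _ (by positivity)
        linarith
      push_cast at *
      rw [show (n:ℝ) + 1 + 1 = n + 2 by ring]
      linarith
  intro n
  refine le_trans (Finset.sum_le_sum_of_subset_of_nonneg (t := Finset.range (n + 2)) ?_ ?_) ((key n).trans ?_)
  · intro i; simp only [Finset.mem_range]; omega
  · intros; positivity
  · have : 0 ≤ 1 / (s - 1) * (1 / ((n : ℝ) + 1) ^ (s - 1)) := by positivity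
    linarith

open ArithmeticFunction in
theorem far_tsum (s : ℝ) (hs : 1 < s) :
    Summable (fun n : ℕ => Λ n / Real.log n / (n : ℝ) ^ s) ∧
    ∑' n : ℕ, Λ n / Real.log n / (n : ℝ) ^ s ≤ Real.log (1 + 1 / (s - 1)) := by
  have hsum : Summable (fun n : ℕ => 1 / (n : ℝ) ^ s) := Real.summable_one_div_nat_rpow.mpr hs
  have hsf : Summable (fun n : ℕ => Λ n / Real.log n / (n : ℝ) ^ s) := by
    refine Summable.of_nonneg_of_le (fun n => ?_) (fun n => ?_) hsum
    · have := Real.log_natCast_nonneg n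
      have := vonMangoldt_nonneg (n := n)
      positivity
    · gcongr
      exact div_le_one_of_le₀ vonMangoldt_le_log (Real.log_natCast_nonneg n)
  refine ⟨hsf, ?_⟩
  have hsupp : Function.support (fun n : ℕ => Λ n / Real.log n / (n : ℝ) ^ s) ⊆ {n | IsPrimePow n} := by
    intro n hn
    by_contra h
    apply hn
    simp only [Set.mem_ofPred_eq] at h
    simp [vonMangoldt_eq_zero_iff.mpr h]
  rw [tsum_eq_tsum_primes_of_support_subset_prime_powers hsf hsupp]
  have hp1 : ∀ p : Nat.Primes, (0:ℝ) < ((p : ℕ) : ℝ) ^ (-s) ∧ ((p : ℕ) : ℝ) ^ (-s) < 1 := by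
    intro p
    have : (1:ℝ) < ((p : ℕ) : ℝ) := by exact_mod_cast p.2.one_lt
    exact ⟨by positivity, Real.rpow_lt_one_of_one_lt_of_neg this (by linarith)⟩
  have hin : ∀ p : Nat.Primes, ∑' k : ℕ, Λ ((p : ℕ) ^ (k + 1)) / Real.log (((p : ℕ) ^ (k + 1) : ℕ) : ℝ)
      / (((p : ℕ) ^ (k + 1) : ℕ) : ℝ) ^ s = - Real.log (1 - ((p : ℕ) : ℝ) ^ (-s)) := by
    intro p
    have h2 : (1:ℝ) < ((p : ℕ) : ℝ) := by exact_mod_cast p.2.one_lt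
    have h0 : (0:ℝ) < ((p : ℕ) : ℝ) := by linarith
    rw [← (Real.hasSum_pow_div_log_of_abs_lt_one (x := ((p : ℕ) : ℝ) ^ (-s))
      (by rw [abs_of_pos (hp1 p).1]; exact (hp1 p).2)).tsum_eq]
    apply tsum_congr
    intro k
    rw [vonMangoldt_apply_pow (by omega), vonMangoldt_apply_prime p.2]
    have hl := Real.log_pos h2
    push_cast
    rw [Real.log_pow, ← Real.rpow_natCast (_ ^ (-s)), ← Real.rpow_mul h0.le, ← Real.rpow_natCast _ (k+1),
      ← Real.rpow_mul h0.le]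
    rw [show -s * ((k + 1 : ℕ) : ℝ) = -(((k + 1 : ℕ) : ℝ) * s) by ring, Real.rpow_neg h0.le]
    have : (0:ℝ) < (k:ℝ) + 1 := by positivity
    push_cast
    field_simp
  simp_rw [hin]
  rw [Real.le_log_iff_exp_le (by have : 0 < s - 1 := by linarith
                                 positivity)]
  refine le_trans (le_of_eq ?_) (zeta_le s hs)
  have hz := riemannZeta_eulerProduct_exp_log (s := (s : ℂ)) (by simpa using hs)
  rw [zeta_eq_tsum_one_div_nat_cpow (by simpa using hs)] at hz
  have hc1 : ∀ p : Nat.Primes, -Complex.log (1 - ((p : ℕ) : ℂ) ^ (-(s : ℂ))) =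
      ((- Real.log (1 - ((p : ℕ) : ℝ) ^ (-s)) : ℝ) : ℂ) := by
    intro p
    rw [Complex.ofReal_neg, Complex.ofReal_log (by linarith [(hp1 p).2])]
    push_cast
    rw [Complex.ofReal_cpow (by positivity)]
    push_cast; rfl
  have hc2 : ∀ n : ℕ, 1 / (n : ℂ) ^ (s : ℂ) = ((1 / (n : ℝ) ^ s : ℝ) : ℂ) := by
    intro n
    push_cast
    rw [Complex.ofReal_cpow (by positivity)]
    push_cast; rfl
  simp_rw [hc1, hc2] at hz
  rw [← Complex.ofReal_tsum, ← Complex.ofReal_tsum, ← Complex.ofReal_exp] at hz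
  exact_mod_cast hz

theorem harm_bound (a : ℕ) (x : ℝ) (ha : 3 ≤ a) (hax : (a : ℝ) ≤ x) (hL : 1 ≤ Real.log x) :
    (harmonic (Nat.log 2 a / 3) : ℝ) ≤ 0.31 + Real.log (Real.log x) := by
  have hll : 0 ≤ Real.log (Real.log x) := Real.log_nonneg hL
  set q := Nat.log 2 a / 3 with hq
  rcases Nat.eq_zero_or_pos q with h0 | hpos
  · rw [h0]; simp; linarith
  · have h1 := harmonic_le_one_add_log q
    have h2 : 2 ^ (3 * q) ≤ a :=
      (Nat.pow_le_pow_right (by norm_num) (by omega)).trans (Nat.pow_log_le_self 2 (by omega))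
    have h3 : (2:ℝ) ^ (3 * q) ≤ x := le_trans (by exact_mod_cast h2) hax
    have h4 := Real.log_le_log (by positivity) h3
    rw [Real.log_pow] at h4
    push_cast at h4
    have hl2 := Real.log_two_gt_d9
    have hq' : (0:ℝ) < q := by exact_mod_cast hpos
    have h5 : 2 * (q:ℝ) ≤ Real.log x := by nlinarith
    have h6 := Real.log_le_log (by positivity) h5
    rw [Real.log_mul (by norm_num) hq'.ne'] at h6
    linarith

open ArithmeticFunction in
theorem term_bound (a n : ℕ) (x : ℝ) (ha : 3 ≤ a) (hx : x = a + 1 / 2) (hL : 1 ≤ Real.log x)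
    (hn : 2 ≤ n) :
    (x / n) ^ (1 / Real.log x) * (Λ n / (n * Real.log n)) * (1 / |Real.log (x / n)|) ≤
      (if IsPrimePow n ∧ a < n ∧ 2 * n ≤ 3 * a + 1 then 1 / ((n : ℝ) - x) else 0)
      + (if IsPrimePow n ∧ n ≤ a ∧ 2 * a + 1 < 3 * n then 2.25 * (1 / (x - (n : ℝ))) else 0)
      + 6.8 * (Λ n / Real.log n / (n : ℝ) ^ (1 + 1 / Real.log x)) := by
  have ha' : (3:ℝ) ≤ a := by exact_mod_cast ha
  have hn' : (2:ℝ) ≤ n := by exact_mod_cast hn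
  have hn0 : (0:ℝ) < n := by linarith
  have hx0 : 0 < x := by linarith
  have hL0 : 0 < Real.log x := by linarith
  have hln : 0 < Real.log n := Real.log_pos (by linarith)
  have hΛ : 0 ≤ Λ n := vonMangoldt_nonneg
  have hc1 : Λ n / Real.log n ≤ 1 := div_le_one_of_le₀ vonMangoldt_le_log hln.le
  have hc0 : 0 ≤ Λ n / Real.log n := by positivity
  have hF : 0 ≤ 6.8 * (Λ n / Real.log n / (n : ℝ) ^ (1 + 1 / Real.log x)) := by positivity
  by_cases hpp : IsPrimePow n
  swap
  · simp [hpp, vonMangoldt_eq_zero_iff.mpr hpp]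
  have hL1 : 1 / Real.log x ≤ 1 := by rw [div_le_one hL0]; exact hL
  have hrew : (x / n) ^ (1 / Real.log x) * (Λ n / (n * Real.log n)) * (1 / |Real.log (x / n)|)
      = (Λ n / Real.log n) * ((x / n) ^ (1 / Real.log x) * (1 / (n * |Real.log (x / n)|))) := by
    field_simp
  rw [hrew]
  have hw : 0 ≤ (x / n) ^ (1 / Real.log x) * (1 / (n * |Real.log (x / n)|)) := by positivity
  by_cases hR : a < n ∧ 2 * n ≤ 3 * a + 1
  · have hnot : ¬ (n ≤ a ∧ 2 * a + 1 < 3 * n) := by omega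
    simp only [hpp, hR, hnot, true_and, and_self, if_true, if_false, add_zero]
    have hge : (a:ℝ) + 1 ≤ n := by exact_mod_cast hR.1
    have hnx : 0 < n - x := by linarith
    have h1 : (x / n) ^ (1 / Real.log x) ≤ 1 :=
      Real.rpow_le_one (by positivity) (by rw [div_le_one hn0]; linarith) (by positivity)
    have h2 : (n:ℝ) - x ≤ n * |Real.log (x / n)| := by
      have := Real.log_le_sub_one_of_pos (x := x / n) (by positivity)
      have h3 : 1 - x / n ≤ |Real.log (x / n)| := by
        have := neg_le_abs (Real.log (x / n)); linarith
      calc (n:ℝ) - x = n * (1 - x / n) := by field_simp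
        _ ≤ _ := by gcongr
    have h4 : 1 / (n * |Real.log (x / n)|) ≤ 1 / (n - x) := one_div_le_one_div_of_le hnx h2
    have h5 : (x / n) ^ (1 / Real.log x) * (1 / (n * |Real.log (x / n)|)) ≤ 1 * (1 / (n - x)) := by
      gcongr
    have h6 := mul_le_of_le_one_left hw hc1
    linarith
  by_cases hLf : n ≤ a ∧ 2 * a + 1 < 3 * n
  · have hnot : ¬ (a < n ∧ 2 * n ≤ 3 * a + 1) := hR
    simp only [hpp, hLf, hnot, true_and, and_self, if_true, if_false, zero_add]
    have hle : (n:ℝ) ≤ a := by exact_mod_cast hLf.1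
    have hlt : 2 * (a:ℝ) + 1 < 3 * n := by exact_mod_cast hLf.2
    have hxn : 0 < x - n := by linarith
    have hr : x / n ≤ 1.5 := by rw [div_le_iff₀ hn0]; linarith
    have hr1 : 1 ≤ x / n := by rw [le_div_iff₀ hn0]; linarith
    have h1 : (x / n) ^ (1 / Real.log x) ≤ 1.5 :=
      (Real.rpow_le_rpow_of_exponent_le hr1 hL1).trans (by rw [Real.rpow_one]; exact hr)
    have h2 : (x - n) / 1.5 ≤ n * |Real.log (x / n)| := by
      have h7 := Real.one_sub_inv_le_log_of_pos (x := x / n) (by positivity)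
      have h3 : 1 - (x / n)⁻¹ ≤ |Real.log (x / n)| := h7.trans (le_abs_self _)
      calc (x - n) / 1.5 ≤ (x - n) / (x / n) := by gcongr
        _ = n * (1 - (x / n)⁻¹) := by field_simp
        _ ≤ _ := by gcongr
    have h4 : 1 / (n * |Real.log (x / n)|) ≤ 1 / ((x - n) / 1.5) :=
      one_div_le_one_div_of_le (by positivity) h2
    have h5 : (x / n) ^ (1 / Real.log x) * (1 / (n * |Real.log (x / n)|)) ≤ 1.5 * (1 / ((x - n) / 1.5)) := by
      gcongr
    have h6 := mul_le_of_le_one_left hw hc1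
    have h8 : 1.5 * (1 / ((x - n) / 1.5)) = 2.25 * (1 / (x - (n:ℝ))) := by
      field_simp; norm_num
    linarith
  simp only [hpp, hR, hLf, true_and, if_false, zero_add]
  have hlog : 0.4 ≤ Real.log 1.5 := by
    have := Real.le_log_one_add_of_nonneg (x := 0.5) (by norm_num)
    norm_num at *
    linarith
  have hfar : 0.4 ≤ |Real.log (x / n)| := by
    refine hlog.trans ?_
    by_cases hna : n ≤ a
    · have h1 : 3 * n ≤ 2 * a + 1 := by omega
      have h1' : 3 * (n:ℝ) ≤ 2 * a + 1 := by exact_mod_cast h1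
      refine le_trans (Real.log_le_log (by norm_num) ?_) (le_abs_self _)
      rw [le_div_iff₀ hn0]; linarith
    · have h1 : 3 * a + 2 ≤ 2 * n := by omega
      have h1' : 3 * (a:ℝ) + 2 ≤ 2 * n := by exact_mod_cast h1
      refine le_trans ?_ (neg_le_abs _)
      rw [← Real.log_inv]
      refine Real.log_le_log (by norm_num) ?_
      rw [inv_div, le_div_iff₀ hx0]; linarith
  have hpow : (x / n) ^ (1 / Real.log x) * (1 / n) = Real.exp 1 * (1 / (n : ℝ) ^ (1 + 1 / Real.log x)) := by
    rw [Real.div_rpow hx0.le hn0.le, Real.rpow_add hn0, Real.rpow_one, Real.rpow_def_of_pos hx0,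
      mul_one_div_cancel hL0.ne']
    have : (0:ℝ) < (n:ℝ) ^ (1 / Real.log x) := Real.rpow_pos_of_pos hn0 _
    field_simp
  have he := Real.exp_one_lt_d9
  have hq : 1 / |Real.log (x / n)| ≤ 2.5 := by
    rw [div_le_iff₀ (by linarith)]; linarith
  have hP : 0 < 1 / (n : ℝ) ^ (1 + 1 / Real.log x) := by positivity
  calc (Λ n / Real.log n) * ((x / n) ^ (1 / Real.log x) * (1 / (n * |Real.log (x / n)|)))
      = (Λ n / Real.log n) * (((x / n) ^ (1 / Real.log x) * (1 / n)) * (1 / |Real.log (x / n)|)) := by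
        rw [mul_assoc ((x / (n:ℝ)) ^ (1 / Real.log x)), one_div_mul_one_div]
    _ = (Λ n / Real.log n) * ((Real.exp 1 * (1 / (n : ℝ) ^ (1 + 1 / Real.log x))) * (1 / |Real.log (x / n)|)) := by
        rw [hpow]
    _ ≤ (Λ n / Real.log n) * ((2.72 * (1 / (n : ℝ) ^ (1 + 1 / Real.log x))) * 2.5) := by
        gcongr
        linarith
    _ = _ := by ring

open ArithmeticFunction in
theorem truncated_perron_error_bound (x T : ℝ)
    (hx : ∃ m : ℕ, 0 < m ∧ x = m + 1 / 2) (hx' : 3.5 ≤ x)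
    (hT : 1 / Real.log (3 / 2) ≤ T) :
    (∑' n : ℕ, if 2 ≤ n then
        (x / n) ^ (1 / Real.log x) * (Λ n / (n * Real.log n)) *
          min 1 (1 / (T * |Real.log (x / n)|))
      else 0)
    ≤ (40.23 * Real.log (Real.log x) + 58.12 + 3.87 / Real.log x
        + 5.22 * Real.log x / Real.sqrt x - 1.84 / Real.sqrt x) / T := by
  classical
  obtain ⟨a, -, hxa⟩ := hx
  have hT0 : 0 < T := lt_of_lt_of_le (one_div_pos.mpr (Real.log_pos (by norm_num))) hT
  have ha : 3 ≤ a := by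
    have : (3:ℝ) ≤ a := by norm_num at hx'; linarith
    exact_mod_cast this
  have hx3 : (3.5:ℝ) ≤ x := hx'
  have hx0 : 0 < x := by linarith
  have hL : 1 ≤ Real.log x := by
    rw [Real.le_log_iff_exp_le hx0]
    have := Real.exp_one_lt_d9
    linarith
  have hL0 : 0 < Real.log x := by linarith
  have hll : 0 ≤ Real.log (Real.log x) := Real.log_nonneg hL
  have hH := harm_bound a x ha (by linarith) hL
  have hs : 1 < 1 + 1 / Real.log x := by
    have : 0 < 1 / Real.log x := by positivity
    linarith
  obtain ⟨hsum, hfar⟩ := far_tsum (1 + 1 / Real.log x) hs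
  have hfar' : Real.log (1 + 1 / (1 + 1 / Real.log x - 1)) ≤ Real.log (Real.log x) + 1 / Real.log x := by
    have e1 : 1 + 1 / (1 + 1 / Real.log x - 1) = Real.log x * (1 + 1 / Real.log x) := by
      field_simp; ring
    rw [e1, Real.log_mul hL0.ne' (by positivity)]
    have := Real.log_le_sub_one_of_pos (x := 1 + 1 / Real.log x) (by positivity)
    linarith
  have hFnn : ∀ n : ℕ, 0 ≤ Λ n / Real.log n / (n : ℝ) ^ (1 + 1 / Real.log x) := by
    intro n
    have := Real.log_natCast_nonneg n
    have := vonMangoldt_nonneg (n := n)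
    positivity
  have hfinal : 9 * (harmonic (Nat.log 2 a / 3) : ℝ) + 14
      + 2.25 * (9 * (harmonic (Nat.log 2 a / 3) : ℝ) + 14)
      + 6.8 * (Real.log (Real.log x) + 1 / Real.log x) ≤
      40.23 * Real.log (Real.log x) + 58.12 + 3.87 / Real.log x
        + 5.22 * Real.log x / Real.sqrt x - 1.84 / Real.sqrt x := by
    have h1 : 1.84 / Real.sqrt x ≤ 5.22 * Real.log x / Real.sqrt x := by
      gcongr; linarith
    have h2 : 1 / Real.log x ≤ 1 := by rw [div_le_one hL0]; exact hL
    have h3 : 3.87 / Real.log x = 3.87 * (1 / Real.log x) := by ring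
    rw [h3]
    linarith
  apply Real.tsum_le_of_sum_le
  · intro n
    simp only [Pi.zero_apply]
    split_ifs
    · have := Real.log_natCast_nonneg n
      have := vonMangoldt_nonneg (n := n)
      positivity
    · exact le_rfl
  intro u
  rw [le_div_iff₀ hT0, Finset.sum_mul]
  refine le_trans ?_ hfinal
  have hpt : ∀ n ∈ u, (if 2 ≤ n then
        (x / n) ^ (1 / Real.log x) * (Λ n / (n * Real.log n)) *
          min 1 (1 / (T * |Real.log (x / n)|))
      else 0) * T ≤
      (if IsPrimePow n ∧ a < n ∧ 2 * n ≤ 3 * a + 1 then 1 / ((n : ℝ) - x) else 0)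
      + (if IsPrimePow n ∧ n ≤ a ∧ 2 * a + 1 < 3 * n then 2.25 * (1 / (x - (n : ℝ))) else 0)
      + 6.8 * (Λ n / Real.log n / (n : ℝ) ^ (1 + 1 / Real.log x)) := by
    intro n _
    by_cases hn : 2 ≤ n
    · rw [if_pos hn]
      refine le_trans ?_ (term_bound a n x ha hxa hL hn)
      have := Real.log_natCast_nonneg n
      have := vonMangoldt_nonneg (n := n)
      calc _ ≤ (x / n) ^ (1 / Real.log x) * (Λ n / (n * Real.log n)) *
          (1 / (T * |Real.log (x / n)|)) * T := by
            gcongr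
            exact min_le_right _ _
        _ = _ := by
          rw [mul_assoc, one_div_mul_eq_div, div_mul_cancel_left₀ hT0.ne', one_div |Real.log (x / n)|]
    · rw [if_neg hn, zero_mul]
      have h1 : ¬ IsPrimePow n := fun h => hn h.two_le
      have := hFnn n
      simp only [h1, false_and, if_false]
      linarith
  refine (Finset.sum_le_sum hpt).trans ?_
  rw [Finset.sum_add_distrib, Finset.sum_add_distrib, ← Finset.sum_filter, ← Finset.sum_filter,
    ← Finset.mul_sum, ← Finset.mul_sum]
  have r1 := right_sum a (u.filter fun n => IsPrimePow n ∧ a < n ∧ 2 * n ≤ 3 * a + 1)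
    (fun n hn => (Finset.mem_filter.mp hn).2.1)
    (fun n hn => by have := (Finset.mem_filter.mp hn).2; omega)
  have r2 := left_sum a (u.filter fun n => IsPrimePow n ∧ n ≤ a ∧ 2 * a + 1 < 3 * n)
    (fun n hn => (Finset.mem_filter.mp hn).2.1)
    (fun n hn => by have := (Finset.mem_filter.mp hn).2; omega)
  have r3 := (hsum.sum_le_tsum u (fun n _ => hFnn n)).trans (hfar.trans hfar')
  rw [← hxa] at r1 r2
  linarith
end

section
/- For every real σ > 0, log ζ(1+σ) ≤ −log σ + γ·σ, where ζ is the Riemann zeta function and γ is the Euler–Mascheroni constant. -/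
open Filter Topology in
lemma aux_mono (f f' : ℝ → ℝ) (a : ℝ) (h : ∀ x, a ≤ x → HasDerivAt f (f' x) x)
    (h0 : f a = 0) (hp : ∀ x, a ≤ x → 0 ≤ f' x) (x : ℝ) (hx : a ≤ x) : 0 ≤ f x := by
  have hm : MonotoneOn f (Set.Ici a) := by
    apply monotoneOn_of_deriv_nonneg (convex_Ici a)
    · exact fun y hy => (h y hy).continuousAt.continuousWithinAt
    · intro y hy
      rw [interior_Ici] at hy
      exact (h y (le_of_lt hy)).differentiableAt.differentiableWithinAt
    · intro y hy
      rw [interior_Ici] at hy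
      rw [(h y (le_of_lt hy)).deriv]
      exact hp y (le_of_lt hy)
  have := hm (Set.mem_Ici.2 le_rfl) (Set.mem_Ici.2 hx) hx
  rwa [h0] at this

lemma trap_ineq (σ : ℝ) (hσ : 0 < σ) (a : ℝ) (ha : 1 ≤ a) (x : ℝ) (hx : a ≤ x) :
    0 ≤ (1 + σ) * (2 + σ) / 2 * ((a⁻¹ + x⁻¹) / 2 * (x - a) - (Real.log x - Real.log a))
      - ((a ^ (-1 - σ) + x ^ (-1 - σ)) / 2 * (x - a) - (a ^ (-σ) - x ^ (-σ)) / σ) := by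
  have e1 : ∀ y : ℝ, a ≤ y → y ^ (-1 - σ) = y ^ (-σ) / y := by
    intro y hy
    have : 0 < y := by linarith
    rw [show -1 - σ = -σ - 1 by ring, Real.rpow_sub_one this.ne']
  have e2 : ∀ y : ℝ, a ≤ y → y ^ (-1 - σ - 1) = y ^ (-σ) / y ^ 2 := by
    intro y hy
    have : 0 < y := by linarith
    rw [Real.rpow_sub_one this.ne', e1 y hy]; field_simp
  have e3 : ∀ y : ℝ, a ≤ y → y ^ (-1 - σ - 1 - 1) = y ^ (-σ) / y ^ 3 := by
    intro y hy
    have : 0 < y := by linarith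
    rw [Real.rpow_sub_one this.ne', e2 y hy]; field_simp
  refine aux_mono (fun x => (1 + σ) * (2 + σ) / 2 * ((a⁻¹ + x⁻¹) / 2 * (x - a)
      - (Real.log x - Real.log a))
      - ((a ^ (-1 - σ) + x ^ (-1 - σ)) / 2 * (x - a) - (a ^ (-σ) - x ^ (-σ)) / σ))
    (fun x => (1 + σ) * (2 + σ) / 2 * ((a⁻¹ + x⁻¹) / 2 - (x ^ 2)⁻¹ * (x - a) / 2 - x⁻¹)
      - ((a ^ (-1 - σ) + x ^ (-1 - σ)) / 2 - (1 + σ) * x ^ (-1 - σ - 1) * (x - a) / 2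
        - x ^ (-1 - σ))) a ?_ (by simp) ?_ x hx
  · intro y hy
    have hy0 : y ≠ 0 := by linarith
    have d1 := hasDerivAt_inv hy0
    have d2 := Real.hasDerivAt_log hy0
    have d3 := Real.hasDerivAt_rpow_const (x := y) (p := -1 - σ) (Or.inl hy0)
    have d4 := Real.hasDerivAt_rpow_const (x := y) (p := -σ) (Or.inl hy0)
    have d5 := (hasDerivAt_id y).sub_const a
    have := ((((d1.const_add a⁻¹).div_const 2).mul d5).sub (d2.sub_const (Real.log a))).const_mul
      ((1 + σ) * (2 + σ) / 2) |>.sub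
      ((((d3.const_add (a ^ (-1 - σ))).div_const 2).mul d5).sub
        ((d4.const_sub (a ^ (-σ))).div_const σ))
    refine this.congr_deriv ?_
    rw [show -σ - 1 = -1 - σ by ring]
    simp only [id]
    field_simp
    ring
  · refine aux_mono _ (fun x => (1 + σ) * (2 + σ) / 2 * (x - a) *
      ((x ^ 3)⁻¹ - x ^ (-1 - σ - 1 - 1))) a ?_ ?_ ?_
    · intro y hy
      have hy0 : y ≠ 0 := by linarith
      have d1 := hasDerivAt_inv hy0
      have d2 := ((hasDerivAt_id y).pow 2).inv (pow_ne_zero 2 hy0)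
      have d3 := Real.hasDerivAt_rpow_const (x := y) (p := -1 - σ) (Or.inl hy0)
      have d4 := Real.hasDerivAt_rpow_const (x := y) (p := -1 - σ - 1) (Or.inl hy0)
      have d5 := (hasDerivAt_id y).sub_const a
      have := (((((d1.const_add a⁻¹).div_const 2).sub ((d2.mul d5).div_const 2)).sub d1).const_mul
        ((1 + σ) * (2 + σ) / 2)).sub
        ((((d3.const_add (a ^ (-1 - σ))).div_const 2).sub
          (((d4.const_mul (1 + σ)).mul d5).div_const 2)).sub d3)
      refine this.congr_deriv ?_
      simp
      rw [e2 y hy, e3 y hy]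
      field_simp
      ring
    · simp
    · intro y hy
      have hy0 : 0 < y := by linarith
      rw [e3 y hy]
      have : y ^ (-σ) ≤ 1 := Real.rpow_le_one_of_one_le_of_nonpos (by linarith) (by linarith)
      have h3 : y ^ (-σ) / y ^ 3 ≤ (y ^ 3)⁻¹ := by
        rw [inv_eq_one_div]; gcongr
      have := sub_nonneg.2 hy
      have := sub_nonneg.2 h3
      positivity

lemma partial_ineq (σ : ℝ) (hσ : 0 < σ) (N : ℕ) :
    (∑ n ∈ Finset.range N, ((n : ℝ) + 1) ^ (-1 - σ)) - 1 / 2 + ((N : ℝ) + 1) ^ (-1 - σ) / 2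
      - (1 - ((N : ℝ) + 1) ^ (-σ)) / σ ≤
    (1 + σ) * (2 + σ) / 2 * ((harmonic N : ℝ) - 1 / 2 + ((N : ℝ) + 1)⁻¹ / 2
      - Real.log ((N : ℝ) + 1)) := by
  induction N with
  | zero => simp
  | succ n ih =>
    have := trap_ineq σ hσ (n + 1) (by linarith [n.cast_nonneg (α := ℝ)]) (n + 1 + 1) (by linarith)
    rw [Finset.sum_range_succ, harmonic_succ]
    push_cast
    have e : ((n : ℝ) + 1 + 1) - (n + 1) = 1 := by ring
    rw [e] at this
    have e' : ∀ u v : ℝ, (u - v) / σ = u / σ - v / σ := fun u v => sub_div _ _ _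
    rw [e'] at *
    nlinarith

open Filter Topology in
lemma zeta_bound (σ : ℝ) (hσ : 0 < σ) :
    0 < (riemannZeta (1 + (σ : ℂ))).re ∧
    (riemannZeta (1 + (σ : ℂ))).re ≤ 1 / σ + 1 / 2 +
      (1 + σ) * (2 + σ) / 2 * (Real.eulerMascheroniConstant - 1 / 2) := by
  have hs : Summable (fun n : ℕ => ((n : ℝ) + 1) ^ (-1 - σ)) := by
    have := (summable_nat_add_iff 1).2 (Real.summable_nat_rpow.2 (show -1 - σ < -1 by linarith))
    simpa using this
  have hz : riemannZeta (1 + (σ : ℂ)) = ((∑' n : ℕ, ((n : ℝ) + 1) ^ (-1 - σ) : ℝ) : ℂ) := by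
    rw [zeta_eq_tsum_one_div_nat_add_one_cpow (by simpa using hσ), Complex.ofReal_tsum]
    congr 1
    ext n
    rw [Complex.ofReal_cpow (by positivity)]
    push_cast
    rw [show (-1 - (σ : ℂ)) = -(1 + σ) by ring, Complex.cpow_neg, one_div]
  rw [hz, Complex.ofReal_re]
  refine ⟨hs.tsum_pos (fun n => by positivity) 0 (by simp), ?_⟩
  have hN : Tendsto (fun N : ℕ => (N : ℝ) + 1) atTop atTop :=
    tendsto_atTop_add_const_right _ _ tendsto_natCast_atTop_atTop
  have t1 := hs.hasSum.tendsto_sum_nat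
  have t2 : Tendsto (fun N : ℕ => ((N : ℝ) + 1) ^ (-1 - σ)) atTop (𝓝 0) := by
    have := (tendsto_rpow_neg_atTop (show 0 < 1 + σ by linarith)).comp hN
    rw [show -(1 + σ) = -1 - σ by ring] at this
    exact this
  have t3 : Tendsto (fun N : ℕ => ((N : ℝ) + 1) ^ (-σ)) atTop (𝓝 0) :=
    (tendsto_rpow_neg_atTop hσ).comp hN
  have t4 : Tendsto (fun N : ℕ => ((N : ℝ) + 1)⁻¹) atTop (𝓝 0) := tendsto_inv_atTop_zero.comp hN
  have t5 := Real.tendsto_harmonic_sub_log_add_one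
  have L := ((t1.sub_const (1 / 2)).add (t2.div_const 2)).sub ((t3.const_sub 1).div_const σ)
  have R := ((t5.add (t4.div_const 2)).sub_const (1 / 2)).const_mul ((1 + σ) * (2 + σ) / 2)
  have := le_of_tendsto_of_tendsto' L R (fun N => by
    refine (partial_ineq σ hσ N).trans (le_of_eq ?_)
    ring)
  simp only [zero_div, add_zero, sub_zero] at this
  linarith

lemma gamma_lt : Real.eulerMascheroniConstant < 3 / 5 := by
  refine (Real.eulerMascheroniConstant_lt_eulerMascheroniSeq' 32).trans ?_
  have h : Real.log (32 : ℝ) = 5 * Real.log 2 := by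
    rw [show (32 : ℝ) = 2 ^ 5 by norm_num, Real.log_pow]; norm_num
  have h2 := Real.log_two_gt_d9
  have h3 : (harmonic 32 : ℚ) < 406 / 100 := by
    norm_num [harmonic, Finset.sum_range_succ]
  have h4 : ((harmonic 32 : ℚ) : ℝ) < 406 / 100 := by
    have := (Rat.cast_lt (K := ℝ)).2 h3
    push_cast at this
    exact this
  simp only [Real.eulerMascheroniSeq']
  norm_num
  rw [h]
  linarith

lemma poly_ineq (g σ : ℝ) (h1 : 1 / 2 < g) (h2 : g < 3 / 5) (hσ : 0 < σ) :
    0 ≤ g ^ 2 / 2 + g ^ 3 * σ / 6 + g ^ 4 * σ ^ 2 / 24 - (g - 1 / 2) * (3 + σ) / 2 := by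
  have hd : 0 < g - 1 / 2 := by linarith
  have h3 : 1 / 8 + (g - 1 / 2) * 3 / 4 ≤ g ^ 3 := by nlinarith [pow_pos hd 2, pow_pos hd 3]
  have h4 : 1 / 16 + (g - 1 / 2) / 2 ≤ g ^ 4 := by
    nlinarith [pow_pos hd 2, pow_pos hd 3, pow_pos hd 4]
  have h5 : 1 / 8 - (g - 1 / 2) + (g - 1 / 2) ^ 2 / 2 = g ^ 2 / 2 - (g - 1 / 2) * 3 / 2 := by ring
  set d := g - 1 / 2 with hdd
  have hd2 : d < 1 / 10 := by linarith
  have a4 := mul_le_mul_of_nonneg_right h4 (sq_nonneg σ)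
  have a3 := mul_le_mul_of_nonneg_right h3 hσ.le
  have k : 0 ≤ (1 / 8 - d) + (1 / 48 - d * 3 / 8) * σ + (1 / 384 + d / 48) * σ ^ 2 := by
    have k0 : 0 ≤ 1 / 8 + 1 / 48 * σ + 1 / 384 * σ ^ 2 := by positivity
    have k1 : 0 ≤ (1 / 40 : ℝ) + (1 / 48 - 3 / 80) * σ + (1 / 384 + 1 / 480) * σ ^ 2 := by
      nlinarith [sq_nonneg (σ - 2)]
    nlinarith [mul_nonneg hd.le k1, mul_nonneg (sub_nonneg.2 hd2.le) k0]
  nlinarith [sq_nonneg d]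

/-- Lemma 1: for `σ > 0`, `log ζ(1+σ) ≤ -log σ + γ σ`, where `γ` is the
Euler–Mascheroni constant.  (For real `s > 1`, `ζ(s)` is real, so we take the
real part.) -/
theorem log_zeta_le (σ : ℝ) (hσ : 0 < σ) :
    Real.log (riemannZeta (1 + (σ : ℂ))).re
      ≤ -Real.log σ + Real.eulerMascheroniConstant * σ := by
  obtain ⟨hp, hb⟩ := zeta_bound σ hσ
  have h1 := Real.one_half_lt_eulerMascheroniConstant
  have h2 := gamma_lt
  set g := Real.eulerMascheroniConstant
  have hpoly := poly_ineq g σ h1 h2 hσ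
  have he := Real.sum_le_exp_of_nonneg (x := g * σ) (by positivity) 5
  norm_num [Finset.sum_range_succ, Nat.factorial] at he
  have key : (riemannZeta (1 + (σ : ℂ))).re ≤ Real.exp (g * σ) / σ := by
    rw [le_div_iff₀ hσ]
    have hb' := mul_le_mul_of_nonneg_right hb hσ.le
    have e : 1 / σ * σ = 1 := by field_simp
    have := mul_nonneg (sq_nonneg σ) hpoly
    nlinarith
  calc _ ≤ Real.log (Real.exp (g * σ) / σ) := Real.log_le_log hp key
    _ = _ := by rw [Real.log_div (Real.exp_ne_zero _) hσ.ne', Real.log_exp]; ring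
end

section
/- Let x > 1 be a half-integer (x = m + 1/2 for some positive integer m) and let C = 1284699552/444215525. If P is any finite set of at most eight primes, each lying in the open interval (x/2, x), then ∑_{p ∈ P} 1/(x − p) ≤ C. (Since 1/(x−p) is increasing in p, this is equivalent to the paper's statement that the sum over the largest eight primes in (x/2, x) is at most C, and the bound C is sharp.) -/
/-- Dual bound for each residue class mod 30, with threshold `2/53`. -/
theorem aux_residues : ∀ r < 30, (8 * (2 / 53) : ℚ) +
    ∑ d ∈ (Finset.range 27).filter (fun d => Nat.Coprime (r + 30 - d) 30),
      (2 / (2 * (d : ℚ) + 1) - 2 / 53) ≤ 1284699552 / 444215525 := by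
  decide +kernel

/-- The cases `m < 10`. -/
theorem aux_small : ∀ m < 10,
    ∑ p ∈ (Finset.range (m + 1)).filter (fun p => p.Prime ∧ 2 * m + 1 < 4 * p),
      2 / (2 * ((m - p : ℕ) : ℚ) + 1) ≤ 1284699552 / 444215525 := by
  decide +kernel

theorem aux_rat (m : ℕ) (P : Finset ℕ) (hcard : P.card ≤ 8)
    (hP : ∀ p ∈ P, p.Prime ∧ 2 * m + 1 < 4 * p ∧ p ≤ m) :
    ∑ p ∈ P, 2 / (2 * ((m - p : ℕ) : ℚ) + 1) ≤ 1284699552 / 444215525 := by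
  by_cases hm : m < 10
  · refine le_trans (Finset.sum_le_sum_of_subset_of_nonneg ?_ ?_) (aux_small m hm)
    · intro p hp
      obtain ⟨h1, h2, h3⟩ := hP p hp
      simp only [Finset.mem_filter, Finset.mem_range]
      exact ⟨by omega, h1, h2⟩
    · intros; positivity
  · have hr := aux_residues (m % 30) (Nat.mod_lt _ (by norm_num))
    refine le_trans ?_ hr
    set S := (Finset.range 27).filter (fun d => Nat.Coprime (m % 30 + 30 - d) 30) with hS
    have hpt : ∀ d : ℕ, 2 / (2 * (d : ℚ) + 1) ≤
        2 / 53 + (if d < 27 then (2 / (2 * (d : ℚ) + 1) - 2 / 53) else 0) := by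
      intro d
      split_ifs with h
      · linarith
      · have : (27 : ℚ) ≤ d := by exact_mod_cast (by omega : 27 ≤ d)
        rw [add_zero]
        apply div_le_div_of_nonneg_left <;> linarith
    have hnn : ∀ d : ℕ, d < 27 → (0 : ℚ) ≤ 2 / (2 * (d : ℚ) + 1) - 2 / 53 := by
      intro d h
      have : (d : ℚ) ≤ 26 := by exact_mod_cast (by omega : d ≤ 26)
      rw [sub_nonneg]
      apply div_le_div_of_nonneg_left
      · norm_num
      · positivity
      · linarith
    have hinj : Set.InjOn (fun p => m - p) (P.filter (fun p => m - p < 27) : Finset ℕ) := by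
      intro a ha b hb hab
      simp only [Finset.coe_filter, Set.mem_setOf_eq] at ha hb hab
      have := hP a ha.1
      have := hP b hb.1
      omega
    calc ∑ p ∈ P, 2 / (2 * ((m - p : ℕ) : ℚ) + 1)
        ≤ ∑ p ∈ P, ((2 / 53 : ℚ) + (if m - p < 27 then
            (2 / (2 * ((m - p : ℕ) : ℚ) + 1) - 2 / 53) else 0)) :=
          Finset.sum_le_sum fun p _ => hpt (m - p)
      _ = P.card * (2 / 53 : ℚ) + ∑ p ∈ P.filter (fun p => m - p < 27),
            (2 / (2 * ((m - p : ℕ) : ℚ) + 1) - 2 / 53) := by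
          rw [Finset.sum_add_distrib, Finset.sum_const, nsmul_eq_mul, Finset.sum_filter]
      _ = P.card * (2 / 53 : ℚ) + ∑ d ∈ (P.filter (fun p => m - p < 27)).image (fun p => m - p),
            (2 / (2 * (d : ℚ) + 1) - 2 / 53) := by
          rw [Finset.sum_image hinj]
      _ ≤ _ := by
          apply add_le_add
          · have : (P.card : ℚ) ≤ 8 := by exact_mod_cast hcard
            linarith
          · apply Finset.sum_le_sum_of_subset_of_nonneg
            · intro d hd
              simp only [Finset.mem_image, Finset.mem_filter] at hd
              obtain ⟨p, ⟨hp, hlt⟩, rfl⟩ := hd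
              obtain ⟨h1, h2, h3⟩ := hP p hp
              simp only [hS, Finset.mem_filter, Finset.mem_range]
              refine ⟨hlt, ?_⟩
              have hc : Nat.Coprime p 30 := by
                rw [Nat.Prime.coprime_iff_not_dvd h1]
                intro hd
                have hle := Nat.le_of_dvd (by norm_num) hd
                have h6 : 6 ≤ p := by omega
                clear hinj
                interval_cases p <;> revert h1 hd <;> decide
              have hmod : (m % 30 + 30 - (m - p)) % 30 = p % 30 := by omega
              have hg : Nat.gcd (m % 30 + 30 - (m - p)) 30 = Nat.gcd p 30 :=
                Nat.ModEq.gcd_eq hmod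
              exact hg.trans hc
            · intro d hd _
              simp only [hS, Finset.mem_filter, Finset.mem_range] at hd
              exact hnn d hd.1

/-- Lemma 3(a): for `x > 1` a half-integer, the sum of `1/(x - p)` over any set of
at most eight primes in `(x/2, x)` is at most `C = 1284699552/444215525`. -/
theorem sum_inv_x_sub_p_le (x : ℝ) (hx : ∃ m : ℕ, 0 < m ∧ x = m + 1 / 2)
    (hx1 : 1 < x) (P : Finset ℕ) (hcard : P.card ≤ 8)
    (hP : ∀ p ∈ P, p.Prime ∧ x / 2 < p ∧ (p : ℝ) < x) :
    ∑ p ∈ P, 1 / (x - p) ≤ (1284699552 : ℝ) / 444215525 := by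
  obtain ⟨m, _, rfl⟩ := hx
  have hQ : ∀ p ∈ P, p.Prime ∧ 2 * m + 1 < 4 * p ∧ p ≤ m := by
    intro p hp
    obtain ⟨h1, h2, h3⟩ := hP p hp
    refine ⟨h1, ?_, ?_⟩
    · have : (2 * m + 1 : ℝ) < 4 * p := by linarith
      exact_mod_cast this
    · have : (2 * p : ℝ) < 2 * m + 1 := by linarith
      have : 2 * p < 2 * m + 1 := by exact_mod_cast this
      omega
  have h := aux_rat m P hcard hQ
  have h' : ((∑ p ∈ P, 2 / (2 * ((m - p : ℕ) : ℚ) + 1) : ℚ) : ℝ) ≤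
      ((1284699552 / 444215525 : ℚ) : ℝ) := by exact_mod_cast h
  push_cast at h'
  refine le_trans (le_of_eq (Finset.sum_congr rfl ?_)) h'
  intro p hp
  have hle := (hQ p hp).2.2
  have h0 : (p : ℝ) ≤ m := by exact_mod_cast hle
  rw [Nat.cast_sub hle, div_eq_div_iff (by linarith) (by linarith)]
  ring
end

section
/- Let x > 1 be a half-integer (x = m + 1/2 for some positive integer m) and let C = 1284699552/444215525. If P is any finite set of at most eight primes, each lying in the open interval (x, 3x/2), then ∑_{p ∈ P} 1/(p − x) ≤ C. (Since 1/(p−x) is decreasing in p, this is equivalent to the paper's statement that the sum over the smallest eight primes in (x, 3x/2) is at most C, and the bound C is sharp.) -/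
/-- Sieve bound over all residues modulo 210. -/
theorem residue_bound : ∀ r : ℕ, r < 210 →
    ∑ k ∈ (Finset.range 27).filter (fun k => Nat.gcd 210 (r + 1 + k) = 1),
      ((2 : ℚ) / (2 * k + 1) - 2 / 53) ≤ 1284699552 / 444215525 - 16 / 53 := by
  decide +kernel

theorem sieve_bound (m : ℕ) :
    ∑ k ∈ (Finset.range 27).filter (fun k => Nat.gcd 210 (m + 1 + k) = 1),
      ((2 : ℝ) / (2 * k + 1) - 2 / 53) ≤ 1284699552 / 444215525 - 16 / 53 := by
  have h := residue_bound (m % 210) (Nat.mod_lt _ (by norm_num))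
  have e : ∀ k, Nat.gcd 210 (m % 210 + 1 + k) = Nat.gcd 210 (m + 1 + k) := by
    intro k
    rw [Nat.gcd_rec 210 (m % 210 + 1 + k), Nat.gcd_rec 210 (m + 1 + k)]
    congr 1
    omega
  simp only [e] at h
  have h2 := (Rat.cast_le (K := ℝ)).mpr h
  push_cast at h2
  exact h2

/-- Lemma 3(b): for `x > 1` a half-integer, the sum of `1/(p - x)` over any set of
at most eight primes in `(x, 3x/2)` is at most `C = 1284699552/444215525`. -/
theorem sum_inv_p_sub_x_le (x : ℝ) (hx : ∃ m : ℕ, 0 < m ∧ x = m + 1 / 2)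
    (hx1 : 1 < x) (P : Finset ℕ) (hcard : P.card ≤ 8)
    (hP : ∀ p ∈ P, p.Prime ∧ x < p ∧ (p : ℝ) < 3 * x / 2) :
    ∑ p ∈ P, 1 / ((p : ℝ) - x) ≤ (1284699552 : ℝ) / 444215525 := by
  obtain ⟨m, hm, rfl⟩ := hx
  have hP' : ∀ p ∈ P, p.Prime ∧ m + 1 ≤ p ∧ 4 * p < 6 * m + 3 := by
    intro p hp
    obtain ⟨h1, h2, h3⟩ := hP p hp
    refine ⟨h1, ?_, ?_⟩
    · have : (m : ℝ) < p := by linarith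
      exact_mod_cast this
    · have : (4 * p : ℝ) < 6 * m + 3 := by linarith
      exact_mod_cast this
  by_cases h7 : m < 7
  · have key : ∀ S : Finset ℕ, P ⊆ S → (∀ p ∈ S, m + 1 ≤ p) →
        ∑ p ∈ P, 1 / ((p : ℝ) - (m + 1 / 2)) ≤ ∑ p ∈ S, 1 / ((p : ℝ) - (m + 1 / 2)) := by
      intro S hS hle
      apply Finset.sum_le_sum_of_subset_of_nonneg hS
      intro p hp _
      have : ((m + 1 : ℕ) : ℝ) ≤ p := by exact_mod_cast hle p hp
      push_cast at this
      apply one_div_nonneg.mpr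
      linarith
    refine (key ((Finset.Ico (m + 1) 10).filter (fun p => p.Prime ∧ 4 * p < 6 * m + 3)) ?_ ?_).trans ?_
    · intro p hp
      obtain ⟨h1, h2, h3⟩ := hP' p hp
      simp only [Finset.mem_filter, Finset.mem_Ico]
      exact ⟨⟨h2, by omega⟩, h1, h3⟩
    · intro p hp
      simp only [Finset.mem_filter, Finset.mem_Ico] at hp
      exact hp.1.1
    · clear key hP' hP hx1
      interval_cases m <;> simp [Finset.sum_filter, Finset.sum_Ico_succ_top] <;> norm_num
  · have hb := sieve_bound m
    have h1 : ∑ p ∈ P, (1 / ((p : ℝ) - (m + 1 / 2)) - 2 / 53) ≤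
        ∑ k ∈ (Finset.range 27).filter (fun k => Nat.gcd 210 (m + 1 + k) = 1),
          ((2 : ℝ) / (2 * k + 1) - 2 / 53) := by
      rw [← Finset.sum_filter_add_sum_filter_not P (fun p => p < m + 28)]
      have hneg : ∑ p ∈ P.filter (fun p => ¬ p < m + 28),
          (1 / ((p : ℝ) - (m + 1 / 2)) - 2 / 53) ≤ 0 := by
        apply Finset.sum_nonpos
        intro p hp
        have h := (Finset.mem_filter.mp hp).2
        have h' : ((m + 28 : ℕ) : ℝ) ≤ p := by exact_mod_cast not_lt.mp h
        push_cast at h'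
        rw [sub_nonpos, div_le_div_iff₀ (by linarith) (by norm_num)]
        linarith
      have hpos : ∑ p ∈ P.filter (fun p => p < m + 28),
          (1 / ((p : ℝ) - (m + 1 / 2)) - 2 / 53) ≤
          ∑ k ∈ (Finset.range 27).filter (fun k => Nat.gcd 210 (m + 1 + k) = 1),
          ((2 : ℝ) / (2 * k + 1) - 2 / 53) := by
        have himg : ∑ p ∈ P.filter (fun p => p < m + 28),
            (1 / ((p : ℝ) - (m + 1 / 2)) - 2 / 53) =
            ∑ k ∈ (P.filter (fun p => p < m + 28)).image (fun p => p - (m + 1)),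
            ((2 : ℝ) / (2 * k + 1) - 2 / 53) := by
          rw [Finset.sum_image]
          · apply Finset.sum_congr rfl
            intro p hp
            obtain ⟨_, h2, _⟩ := hP' p (Finset.mem_filter.mp hp).1
            obtain ⟨k, rfl⟩ := Nat.exists_eq_add_of_le h2
            have : m + 1 + k - (m + 1) = k := by omega
            rw [this]
            push_cast
            congr 1
            rw [div_eq_div_iff]
            · ring
            · have : (0 : ℝ) ≤ k := Nat.cast_nonneg k
              apply ne_of_gt; linarith
            · positivity
          · intro p hp q hq hpq
            have h2 := (hP' p (Finset.mem_filter.mp hp).1).2.1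
            have h3 := (hP' q (Finset.mem_filter.mp hq).1).2.1
            simp only at hpq
            omega
        rw [himg]
        apply Finset.sum_le_sum_of_subset_of_nonneg
        · intro k hk
          simp only [Finset.mem_image, Finset.mem_filter] at hk
          obtain ⟨p, ⟨hp, hlt⟩, rfl⟩ := hk
          obtain ⟨hp1, h2, _⟩ := hP' p hp
          simp only [Finset.mem_filter, Finset.mem_range]
          refine ⟨by omega, ?_⟩
          rw [show m + 1 + (p - (m + 1)) = p by omega]
          rw [Nat.gcd_comm]
          refine (Nat.Prime.coprime_iff_not_dvd hp1).mpr ?_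
          intro hd
          rw [show 210 = 2 * 3 * 5 * 7 by norm_num, hp1.dvd_mul, hp1.dvd_mul, hp1.dvd_mul] at hd
          rcases hd with ((hd | hd) | hd) | hd <;>
            have := Nat.le_of_dvd (by norm_num) hd <;> omega
        · intro k hk _
          have h := Finset.mem_range.mp (Finset.mem_filter.mp hk).1
          have h' : (k : ℝ) ≤ 26 := by exact_mod_cast Nat.le_of_lt_succ h
          have h0 : (0 : ℝ) ≤ k := Nat.cast_nonneg k
          rw [sub_nonneg, div_le_div_iff₀ (by norm_num) (by linarith)]
          linarith
      linarith
    rw [Finset.sum_sub_distrib, Finset.sum_const, nsmul_eq_mul] at h1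
    have hc : (P.card : ℝ) ≤ 8 := by exact_mod_cast hcard
    linarith
end

section
/- Let x ≥ 3.5 be a half-integer (x = m + 1/2 for some positive integer m) and let T > 0. Then ∑_{x/2 < n < 3x/2} (x/n)^{1/log x} · (Λ(n)/(n·log n)) · min{1, 1/(T·|log(x/n)|)} ≤ (e/(T·log(3/2))) · ∑_{p, k : x/2 < p^k < 3x/2} 1/(k·|x − p^k|), where the right-hand sum runs over all pairs (p, k) with p prime and k ≥ 1 an integer such that x/2 < p^k < 3x/2. -/
lemma perron_log_bound (x y : ℝ) (hx : 0 < x) (hy : 0 < y) (h1 : x / 2 < y) :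
    Real.log (3 / 2) * |x - y| ≤ y * |Real.log (x / y)| := by
  have hl : Real.log (3 / 2) ≤ 1 / 2 := by
    have := Real.log_le_sub_one_of_pos (show (0 : ℝ) < 3 / 2 by norm_num)
    linarith
  have h2 : 0 ≤ |x - y| := abs_nonneg _
  have key : |x - y| / 2 ≤ y * |Real.log (x / y)| := by
    rcases le_total x y with h | h
    · have a := Real.log_le_sub_one_of_pos (div_pos hx hy)
      have b := neg_le_abs (Real.log (x / y))
      have c : y * (1 - x / y) ≤ y * |Real.log (x / y)| :=
        mul_le_mul_of_nonneg_left (by linarith) hy.le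
      have d : y * (1 - x / y) = y - x := by field_simp
      rw [abs_of_nonpos (by linarith : x - y ≤ 0)]
      linarith
    · have a := Real.one_sub_inv_le_log_of_pos (div_pos hx hy)
      have b := le_abs_self (Real.log (x / y))
      have c : y * (1 - (x / y)⁻¹) ≤ y * |Real.log (x / y)| :=
        mul_le_mul_of_nonneg_left (by linarith) hy.le
      have d : y * (1 - (x / y)⁻¹) = (x - y) * (y / x) := by field_simp
      have e : 1 / 2 ≤ y / x := by
        rw [le_div_iff₀ hx]; linarith
      rw [abs_of_nonneg (by linarith : 0 ≤ x - y)]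
      nlinarith
  nlinarith

lemma perron_term_bound (x T y k : ℝ) (hx : 3.5 ≤ x) (hT : 0 < T) (hy : 1 ≤ y) (h1 : x / 2 < y)
    (hne : x ≠ y) (hk : 0 < k) :
    (x / y) ^ (1 / Real.log x) * (1 / (y * k)) * min 1 (1 / (T * |Real.log (x / y)|)) ≤
      Real.exp 1 / (T * Real.log (3 / 2)) * (1 / (k * |x - y|)) := by
  have hx0 : 0 < x := by norm_num at hx; linarith
  have hx1 : 1 < x := by norm_num at hx; linarith
  have hy0 : 0 < y := by linarith
  have hlx : 0 < Real.log x := Real.log_pos hx1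
  have hl : 0 < Real.log (3 / 2) := Real.log_pos (by norm_num)
  have hd : 0 < |x - y| := abs_pos.mpr (sub_ne_zero.mpr hne)
  have hb := perron_log_bound x y hx0 hy0 h1
  have he : (x / y) ^ (1 / Real.log x) ≤ Real.exp 1 := by
    rw [Real.rpow_def_of_pos (div_pos hx0 hy0)]
    apply Real.exp_le_exp.mpr
    rw [mul_one_div, div_le_one hlx, Real.log_div hx0.ne' hy0.ne']
    linarith [Real.log_nonneg hy]
  calc _ ≤ Real.exp 1 * (1 / (y * k)) * (1 / (T * |Real.log (x / y)|)) := by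
        gcongr
        exact min_le_right _ _
    _ = Real.exp 1 / (T * k) * (1 / (y * |Real.log (x / y)|)) := by
        simp only [div_eq_mul_inv, mul_inv]; ring
    _ ≤ Real.exp 1 / (T * k) * (1 / (Real.log (3 / 2) * |x - y|)) := by
        gcongr
    _ = _ := by
        simp only [div_eq_mul_inv, mul_inv]; ring

open Classical in
/-- Sends a prime power `p ^ k` to `(p, k)` and any other `n` to `(n, 0)`. -/
noncomputable def perronIdx (n : ℕ) : ℕ × ℕ :=
  if IsPrimePow n then (n.minFac, n.factorization n.minFac) else (n, 0)

lemma perronIdx_inj : Function.Injective perronIdx := by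
  have key : ∀ n : ℕ, IsPrimePow n → 0 < n.factorization n.minFac := by
    intro n hn
    rcases Nat.eq_zero_or_pos (n.factorization n.minFac) with h | h
    · have := hn.minFac_pow_factorization_eq
      rw [h, pow_zero] at this
      exact absurd this.symm hn.ne_one
    · exact h
  intro a b h
  unfold perronIdx at h
  split_ifs at h with ha hb hb
  · rw [Prod.mk.injEq] at h
    rw [← ha.minFac_pow_factorization_eq, ← hb.minFac_pow_factorization_eq, h.2, h.1]
  · have := key a ha
    simp only [Prod.mk.injEq] at h
    omega
  · have := key b hb
    simp only [Prod.mk.injEq] at h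
    omega
  · simpa using h


open ArithmeticFunction in
/-- The estimate (3.5): reduction of the central part of the Perron error sum to a
sum over prime powers `p^k` with `x/2 < p^k < 3x/2`. -/
theorem perron_error_central_reduction (x T : ℝ)
    (hx : ∃ m : ℕ, 0 < m ∧ x = m + 1 / 2) (hx' : 3.5 ≤ x) (hT : 0 < T) :
    (∑' n : ℕ, if x / 2 < (n : ℝ) ∧ (n : ℝ) < 3 * x / 2 then
        (x / n) ^ (1 / Real.log x) * (Λ n / (n * Real.log n)) *
          min 1 (1 / (T * |Real.log (x / n)|))
      else 0)
    ≤ Real.exp 1 / (T * Real.log (3 / 2)) *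
        ∑' pk : ℕ × ℕ,
          if pk.1.Prime ∧ 1 ≤ pk.2 ∧ x / 2 < (pk.1 : ℝ) ^ pk.2 ∧
              (pk.1 : ℝ) ^ pk.2 < 3 * x / 2 then
            1 / (pk.2 * |x - (pk.1 : ℝ) ^ pk.2|)
          else 0 := by
  have hx0 : 0 < x := by norm_num at hx'; linarith
  have hne : ∀ n : ℕ, x ≠ n := by
    obtain ⟨m, -, rfl⟩ := hx
    intro n h
    have : (2 * m + 1 : ℝ) = 2 * n := by linarith
    have : 2 * m + 1 = 2 * n := by exact_mod_cast this
    omega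
  obtain ⟨N, hN⟩ := exists_nat_gt (3 * x / 2)
  rw [← tsum_mul_left]
  have hl : 0 < Real.log (3 / 2) := Real.log_pos (by norm_num)
  refine Summable.tsum_le_tsum_of_inj perronIdx perronIdx_inj ?_ ?_ ?_ ?_
  · intro c _
    split_ifs
    · positivity
    · simp
  · intro n
    by_cases hn : IsPrimePow n
    · have hpow := hn.minFac_pow_factorization_eq
      have hp : n.minFac.Prime := Nat.minFac_prime hn.ne_one
      have hk : 1 ≤ n.factorization n.minFac := by
        rcases Nat.eq_zero_or_pos (n.factorization n.minFac) with h | h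
        · rw [h, pow_zero] at hpow
          exact absurd hpow.symm hn.ne_one
        · exact h
      have hi : perronIdx n = (n.minFac, n.factorization n.minFac) := by
        simp [perronIdx, hn]
      have hpowR : (n.minFac : ℝ) ^ (n.factorization n.minFac) = n := by exact_mod_cast hpow
      rw [hi]
      simp only [hpowR, hp, hk, true_and]
      split_ifs with h
      · have hn1 : (1 : ℝ) ≤ n := by exact_mod_cast hn.one_lt.le
        have hk0 : (0 : ℝ) < (n.factorization n.minFac : ℝ) := by exact_mod_cast hk
        have hL : Λ n / (n * Real.log n) = 1 / (n * (n.factorization n.minFac : ℝ)) := by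
          have h1 : Real.log n = (n.factorization n.minFac : ℝ) * Real.log n.minFac := by
            rw [← Real.log_pow, hpowR]
          have h2 : 0 < Real.log n.minFac := Real.log_pos (by exact_mod_cast hp.one_lt)
          have h3 : (0 : ℝ) < n := by linarith
          rw [vonMangoldt_apply, if_pos hn, h1]
          field_simp
        rw [hL]
        exact perron_term_bound x T n _ hx' hT hn1 h.1 (hne n) hk0
      · simp
    · have hi : perronIdx n = (n, 0) := by simp [perronIdx, hn]
      rw [hi]
      simp [vonMangoldt_apply, hn]
  · apply summable_of_ne_finset_zero (s := Finset.range N)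
    intro n hn
    rw [if_neg]
    rintro ⟨-, h⟩
    apply hn
    rw [Finset.mem_range]
    exact_mod_cast h.trans hN
  · apply summable_of_ne_finset_zero (s := Finset.range N ×ˢ Finset.range N)
    rintro ⟨p, k⟩ hn
    rw [if_neg, mul_zero]
    rintro ⟨hp, hk, -, h⟩
    apply hn
    have h' : p ^ k < N := by exact_mod_cast h.trans hN
    simp only at hp hk
    rw [Finset.mem_product, Finset.mem_range, Finset.mem_range]
    exact ⟨(Nat.le_self_pow (by omega) p).trans_lt h', (Nat.lt_pow_self hp.one_lt).trans h'⟩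
end

section
/- Let x ≥ 3.5 be a half-integer (x = m + 1/2 for some positive integer m) and let C = 1284699552/444215525. Then ∑_{p prime, x/2 < p < x} 1/(x − p) ≤ C + 2·log(log x). -/
open Finset in
lemma bt_sum_moebius (t : ℕ) (ht : 0 < t) :
    ∑ s ∈ t.divisors, ((ArithmeticFunction.moebius (t / s) : ℤ) : ℝ) = if t = 1 then 1 else 0 := by
  rw [Nat.sum_div_divisors t (fun s => ((ArithmeticFunction.moebius s : ℤ) : ℝ))]
  have h := ArithmeticFunction.coe_mul_zeta_apply (f := ArithmeticFunction.moebius) (x := t)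
  rw [ArithmeticFunction.moebius_mul_coe_zeta, ArithmeticFunction.one_apply] at h
  have h2 := congrArg (fun z : ℤ => (z : ℝ)) h
  simp only [Int.cast_sum] at h2
  rw [← h2]; split_ifs <;> simp

open Finset in
lemma bt_inner (N f g : ℕ) (hf : f ∈ Icc 1 N) (hg : g ∈ Icc 1 N) :
    ∑ d ∈ Icc 1 N, (if f ∣ d ∧ d ∣ g then ((ArithmeticFunction.moebius (g / d) : ℤ) : ℝ) else 0)
      = if f = g then 1 else 0 := by
  rw [mem_Icc] at hf hg
  rw [← sum_filter]
  by_cases hfg : f ∣ g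
  · obtain ⟨t, rfl⟩ := hfg
    have ht : 0 < t := by
      rcases Nat.eq_zero_or_pos t with h | h
      · subst h; omega
      · exact h
    have key : ∑ d ∈ Icc 1 N with (f ∣ d ∧ d ∣ f * t),
        ((ArithmeticFunction.moebius (f * t / d) : ℤ) : ℝ)
        = ∑ s ∈ t.divisors, ((ArithmeticFunction.moebius (t / s) : ℤ) : ℝ) := by
      symm
      apply sum_bij (fun s _ => f * s)
      · intro s hs
        have hs' := Nat.dvd_of_mem_divisors hs
        have h1 := Nat.le_of_dvd ht hs'
        have h2 := Nat.pos_of_mem_divisors hs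
        simp only [mem_filter, mem_Icc]
        refine ⟨⟨Nat.mul_pos (by omega) h2, ?_⟩, Dvd.intro _ rfl, Nat.mul_dvd_mul_left f hs'⟩
        exact (Nat.mul_le_mul_left f h1).trans hg.2
      · intro s _ s' _ h
        exact Nat.eq_of_mul_eq_mul_left (by omega) h
      · intro d hd
        simp only [mem_filter, mem_Icc] at hd
        obtain ⟨_, ⟨s, rfl⟩, h3⟩ := hd
        refine ⟨s, ?_, rfl⟩
        rw [Nat.mem_divisors]
        exact ⟨Nat.dvd_of_mul_dvd_mul_left (by omega) h3, by omega⟩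
      · intro s _
        rw [Nat.mul_div_mul_left _ _ (by omega : 0 < f)]
    rw [key, bt_sum_moebius t ht]
    have : t = 1 ↔ f = f * t := by
      constructor
      · rintro rfl; simp
      · intro h
        exact (Nat.eq_of_mul_eq_mul_left (by omega : 0 < f) (by linarith : f * t = f * 1))
    simp only [this]
  · rw [if_neg (by rintro rfl; exact hfg dvd_rfl)]
    apply sum_eq_zero
    intro d hd
    simp only [mem_filter] at hd
    exact absurd (hd.2.1.trans hd.2.2) hfg

/-- The terms of the Selberg sum. -/
noncomputable def btH (f : ℕ) : ℝ := if Squarefree f then 1 / (f.totient : ℝ) else 0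

/-- The Selberg sum `∑_{n ≤ N} μ²(n)/φ(n)`. -/
noncomputable def btS (N : ℕ) : ℝ := ∑ f ∈ Finset.Icc 1 N, btH f

/-- Unnormalised Selberg weights. -/
noncomputable def btL (N d : ℕ) : ℝ :=
  d * ∑ f ∈ Finset.Icc 1 N, if d ∣ f then
    ((ArithmeticFunction.moebius (f / d) : ℤ) : ℝ) * (((ArithmeticFunction.moebius f : ℤ) : ℝ) * btH f)
    else 0

lemma btH_nonneg (f : ℕ) : 0 ≤ btH f := by
  unfold btH; split_ifs <;> positivity

lemma bt_mu_sq (f : ℕ) : ((ArithmeticFunction.moebius f : ℤ) : ℝ) *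
    (((ArithmeticFunction.moebius f : ℤ) : ℝ) * btH f) = btH f := by
  unfold btH
  split_ifs with h
  · have h2 := ArithmeticFunction.moebius_sq_eq_one_of_squarefree h
    have h3 : ((ArithmeticFunction.moebius f : ℤ) : ℝ) ^ 2 = 1 := by exact_mod_cast h2
    rw [← mul_assoc, ← sq, h3, one_mul]
  · simp

lemma btL_one (N : ℕ) : btL N 1 = btS N := by
  unfold btL btS
  simp only [one_dvd, if_true, Nat.div_one, Nat.cast_one, one_mul, bt_mu_sq]

open Finset in
lemma btL_inv (N f : ℕ) (hf : f ∈ Icc 1 N) :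
    ∑ d ∈ Icc 1 N, (if f ∣ d then btL N d / d else 0)
      = ((ArithmeticFunction.moebius f : ℤ) : ℝ) * btH f := by
  have h1 : ∀ d ∈ Icc 1 N, (if f ∣ d then btL N d / d else 0) =
      ∑ g ∈ Icc 1 N, (if f ∣ d ∧ d ∣ g then ((ArithmeticFunction.moebius (g / d) : ℤ) : ℝ) else 0)
        * (((ArithmeticFunction.moebius g : ℤ) : ℝ) * btH g) := by
    intro d hd
    have hd0 : (d : ℝ) ≠ 0 := by
      rw [mem_Icc] at hd
      exact_mod_cast (by omega : d ≠ 0)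
    by_cases h : f ∣ d
    · simp only [h, if_true, true_and]
      unfold btL
      rw [mul_div_cancel_left₀ _ hd0]
      apply sum_congr rfl
      intro g _
      split_ifs <;> simp
    · simp [h]
  rw [sum_congr rfl h1, sum_comm]
  have h2 : ∀ g ∈ Icc 1 N, ∑ d ∈ Icc 1 N,
      (if f ∣ d ∧ d ∣ g then ((ArithmeticFunction.moebius (g / d) : ℤ) : ℝ) else 0)
        * (((ArithmeticFunction.moebius g : ℤ) : ℝ) * btH g)
      = if f = g then (((ArithmeticFunction.moebius g : ℤ) : ℝ) * btH g) else 0 := by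
    intro g hg
    rw [← sum_mul, bt_inner N f g hf hg]
    split_ifs <;> simp
  rw [sum_congr rfl h2, sum_ite_eq, if_pos hf]

open Finset in
lemma bt_gcd (N d e : ℕ) (hd : d ∈ Icc 1 N) :
    ((d.gcd e : ℕ) : ℝ) = ∑ f ∈ Icc 1 N, (if f ∣ d ∧ f ∣ e then (f.totient : ℝ) else 0) := by
  rw [mem_Icc] at hd
  rw [← sum_filter, ← Nat.sum_totient (d.gcd e)]
  push_cast
  apply sum_congr _ (fun _ _ => rfl)
  ext f
  simp only [Nat.mem_divisors, mem_filter, mem_Icc, Nat.dvd_gcd_iff]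
  constructor
  · rintro ⟨⟨h1, h2⟩, _⟩
    exact ⟨⟨Nat.pos_of_dvd_of_pos h1 (by omega), (Nat.le_of_dvd (by omega) h1).trans hd.2⟩, h1, h2⟩
  · rintro ⟨_, h⟩
    exact ⟨h, (Nat.gcd_pos_of_pos_left _ (by omega)).ne'⟩

open Finset in
lemma bt_quad (N : ℕ) :
    ∑ d ∈ Icc 1 N, ∑ e ∈ Icc 1 N, btL N d * btL N e / ((d.lcm e : ℕ) : ℝ) = btS N := by
  have h1 : ∀ d ∈ Icc 1 N, ∀ e ∈ Icc 1 N, btL N d * btL N e / ((d.lcm e : ℕ) : ℝ) =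
      ∑ f ∈ Icc 1 N, (f.totient : ℝ) * ((if f ∣ d then btL N d / d else 0) *
        (if f ∣ e then btL N e / e else 0)) := by
    intro d hd e he
    have hg := bt_gcd N d e hd
    have h3 : ((d.gcd e : ℕ) : ℝ) * ((d.lcm e : ℕ) : ℝ) = d * e := by
      exact_mod_cast Nat.gcd_mul_lcm d e
    rw [mem_Icc] at hd he
    have hd0 : (d : ℝ) ≠ 0 := by exact_mod_cast (by omega : d ≠ 0)
    have he0 : (e : ℝ) ≠ 0 := by exact_mod_cast (by omega : e ≠ 0)
    have hl0 : ((d.lcm e : ℕ) : ℝ) ≠ 0 := by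
      exact_mod_cast Nat.lcm_ne_zero (by omega) (by omega)
    have h4 : btL N d * btL N e / ((d.lcm e : ℕ) : ℝ) =
        ((d.gcd e : ℕ) : ℝ) * (btL N d / d * (btL N e / e)) := by
      field_simp
      linear_combination (-(btL N d * btL N e)) * h3
    rw [h4, hg, sum_mul]
    apply sum_congr rfl
    intro f _
    by_cases ha : f ∣ d <;> by_cases hb : f ∣ e <;> simp [ha, hb]
  rw [sum_congr rfl (fun d hd => sum_congr rfl (h1 d hd))]
  rw [sum_congr rfl (fun d _ => sum_comm), sum_comm]
  unfold btS
  apply sum_congr rfl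
  intro f hf
  simp only [← mul_sum, ← sum_mul]
  rw [btL_inv N f hf]
  unfold btH
  rw [mem_Icc] at hf
  split_ifs with h
  · have h2 := ArithmeticFunction.moebius_sq_eq_one_of_squarefree h
    have h3 : ((ArithmeticFunction.moebius f : ℤ) : ℝ) ^ 2 = 1 := by exact_mod_cast h2
    have h0 : (f.totient : ℝ) ≠ 0 := by exact_mod_cast (Nat.totient_pos.2 (by omega)).ne'
    field_simp
    linear_combination h3
  · simp

open Finset in
lemma bt_step (N d p : ℕ) (hp : p.Prime) (hpd : ¬ p ∣ d) :
    (p : ℝ) * ∑ f ∈ Icc 1 N with p * d ∣ f, btH f ≤ ∑ f ∈ Icc 1 N with d ∣ f, btH f := by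
  have hcop : Nat.Coprime p d := (Nat.Prime.coprime_iff_not_dvd hp).2 hpd
  have hsplit : ∑ f ∈ Icc 1 N with d ∣ f, btH f =
      ∑ f ∈ Icc 1 N with p * d ∣ f, btH f + ∑ f ∈ Icc 1 N with (d ∣ f ∧ ¬ p ∣ f), btH f := by
    rw [← sum_filter_add_sum_filter_not (Icc 1 N |>.filter (d ∣ ·)) (p ∣ ·)]
    rw [filter_filter, filter_filter]
    congr 1
    apply sum_congr _ (fun _ _ => rfl)
    ext f
    simp only [mem_filter]
    constructor
    · rintro ⟨h, h1, h2⟩; exact ⟨h, hcop.mul_dvd_of_dvd_of_dvd h2 h1⟩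
    · rintro ⟨h, h1⟩; exact ⟨h, (Dvd.intro_left _ rfl).trans h1, (Dvd.intro _ rfl).trans h1⟩
  have hmain : ((p : ℝ) - 1) * ∑ f ∈ Icc 1 N with p * d ∣ f, btH f
      ≤ ∑ f ∈ Icc 1 N with (d ∣ f ∧ ¬ p ∣ f), btH f := by
    have e1 : ((p : ℝ) - 1) * ∑ f ∈ Icc 1 N with p * d ∣ f, btH f =
        ∑ f ∈ (Icc 1 N |>.filter (p * d ∣ ·)).filter Squarefree, btH (f / p) := by
      rw [mul_sum, sum_filter]
      rw [sum_filter (s := (Icc 1 N |>.filter (p * d ∣ ·))) (p := Squarefree), sum_filter]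
      apply sum_congr rfl
      intro f hf
      split_ifs with h1 h2
      · obtain ⟨t, rfl⟩ : p ∣ f := (Dvd.intro _ rfl).trans h1
        have hs := Nat.squarefree_mul_iff.1 h2
        rw [Nat.mul_div_cancel_left _ hp.pos]
        unfold btH
        rw [if_pos h2, if_pos hs.2.2, Nat.totient_mul hs.1, Nat.totient_prime hp]
        have : ((p - 1 : ℕ) : ℝ) = p - 1 := by
          rw [Nat.cast_sub hp.one_lt.le]; simp
        push_cast
        rw [this]
        have h3 : (p : ℝ) - 1 ≠ 0 := by
          have : (1 : ℝ) < p := by exact_mod_cast hp.one_lt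
          linarith
        have h4 : (t.totient : ℝ) ≠ 0 := by
          have : t ≠ 0 := hs.2.2.ne_zero
          exact_mod_cast (Nat.totient_pos.2 (by omega)).ne'
        field_simp
      · unfold btH; rw [if_neg h2]; simp
      · rfl
    rw [e1]
    rw [← sum_image (f := btH) (g := fun f => f / p)]
    · apply sum_le_sum_of_subset_of_nonneg
      · intro g hg
        simp only [mem_image, mem_filter, mem_Icc] at hg ⊢
        obtain ⟨f, ⟨⟨⟨h1, h2⟩, h3⟩, h4⟩, rfl⟩ := hg
        obtain ⟨t, rfl⟩ := h3
        have hf : p * d * t = p * (d * t) := by ring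
        rw [hf] at h1 h2 h4 ⊢
        rw [Nat.mul_div_cancel_left _ hp.pos]
        have hs := Nat.squarefree_mul_iff.1 h4
        refine ⟨⟨Nat.pos_of_ne_zero hs.2.2.ne_zero, ?_⟩, Dvd.intro _ rfl,
          (Nat.Prime.coprime_iff_not_dvd hp).1 hs.1⟩
        exact (Nat.le_mul_of_pos_left _ hp.pos).trans h2
      · intro f _ _; exact btH_nonneg f
    · intro a ha b hb hab
      simp only [coe_filter, mem_filter, Set.mem_ofPred_eq] at ha hb
      have ha' : p ∣ a := (Dvd.intro _ rfl).trans ha.1.2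
      have hb' : p ∣ b := (Dvd.intro _ rfl).trans hb.1.2
      exact (Nat.div_left_inj ha' hb').1 hab
  rw [hsplit]; linarith

open Finset in
lemma bt_dvd (N d : ℕ) (hd : Squarefree d) :
    (d : ℝ) * ∑ f ∈ Icc 1 N with d ∣ f, btH f ≤ btS N := by
  induction d using Nat.strong_induction_on with
  | _ d ih =>
    by_cases h1 : d = 1
    · subst h1; simp [btS]
    · have hp := Nat.minFac_prime h1
      obtain ⟨t, ht⟩ := Nat.minFac_dvd d
      have hs : Squarefree (d.minFac * t) := ht ▸ hd
      have hs := Nat.squarefree_mul_iff.1 hs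
      have ht0 : 0 < t := Nat.pos_of_ne_zero hs.2.2.ne_zero
      have hlt : t < d := by
        rw [ht]; nlinarith [hp.two_le]
      have h2 := ih t hlt hs.2.2
      have h3 := bt_step N t d.minFac hp ((Nat.Prime.coprime_iff_not_dvd hp).1 hs.1)
      rw [← ht] at h3
      have h4 : (d : ℝ) = (d.minFac : ℝ) * t := by exact_mod_cast ht
      calc (d : ℝ) * ∑ f ∈ Icc 1 N with d ∣ f, btH f
          = t * ((d.minFac : ℝ) * ∑ f ∈ Icc 1 N with d ∣ f, btH f) := by
            rw [h4]; ring_nf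
        _ ≤ t * ∑ f ∈ Icc 1 N with t ∣ f, btH f := by gcongr
        _ ≤ btS N := h2

open Finset in
lemma btL_abs (N d : ℕ) : |btL N d| ≤ btS N := by
  by_cases hd : Squarefree d
  · refine le_trans ?_ (bt_dvd N d hd)
    unfold btL
    rw [abs_mul, Nat.abs_cast]
    apply mul_le_mul_of_nonneg_left _ (Nat.cast_nonneg d)
    refine (abs_sum_le_sum_abs _ _).trans ?_
    rw [sum_filter]
    apply sum_le_sum
    intro f _
    have hmu : ∀ n : ℕ, |((ArithmeticFunction.moebius n : ℤ) : ℝ)| ≤ 1 := by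
      intro n
      have := ArithmeticFunction.abs_moebius_le_one (n := n)
      exact_mod_cast this
    split_ifs with h
    · rw [abs_mul, abs_mul, abs_of_nonneg (btH_nonneg f)]
      have h0 := btH_nonneg f
      have := mul_le_mul (hmu (f / d)) (mul_le_of_le_one_left h0 (hmu f)) (by positivity) zero_le_one
      simpa using this
    · simp
  · have : btL N d = 0 := by
      unfold btL
      rw [sum_eq_zero, mul_zero]
      intro f _
      split_ifs with h
      · have : ¬ Squarefree f := fun hf => hd (hf.squarefree_of_dvd h)
        simp [btH, this]
      · rfl
    rw [this, abs_zero]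
    exact sum_nonneg (fun f _ => btH_nonneg f)

open Finset in
lemma bt_count (A B D : ℕ) (hAB : A ≤ B) (hD : 0 < D) :
    |((#{n ∈ Ico A B | D ∣ n} : ℕ) : ℝ) - ((B - A : ℕ) : ℝ) / D| ≤ 1 := by
  have h := Nat.Ico_filter_modEq_card A B (r := D) hD 0
  have h2 : #{n ∈ Ico A B | D ∣ n} = #{n ∈ Ico A B | n ≡ 0 [MOD D]} := by
    congr 1; ext n; simp [Nat.modEq_zero_iff_dvd]
  rw [h2]
  have hDr : (0 : ℚ) < D := by exact_mod_cast hD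
  have hle : ((A : ℚ) - (0 : ℕ)) / D ≤ ((B : ℚ) - (0 : ℕ)) / D := by
    have : (A : ℚ) ≤ B := by exact_mod_cast hAB
    gcongr
  rw [max_eq_left (by have := Int.ceil_le_ceil hle; linarith)] at h
  have e1 := Int.ceil_lt_add_one (((B : ℚ) - (0 : ℕ)) / D)
  have e2 := Int.le_ceil (((B : ℚ) - (0 : ℕ)) / D)
  have e3 := Int.ceil_lt_add_one (((A : ℚ) - (0 : ℕ)) / D)
  have e4 := Int.le_ceil (((A : ℚ) - (0 : ℕ)) / D)
  have h3 : ((#{n ∈ Ico A B | n ≡ 0 [MOD D]} : ℕ) : ℚ) =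
     (⌈((B : ℚ) - (0 : ℕ)) / D⌉ : ℚ) - (⌈((A : ℚ) - (0 : ℕ)) / D⌉ : ℚ) := by exact_mod_cast h
  have h5 : ((B : ℚ) - (0 : ℕ)) / D - ((A : ℚ) - (0 : ℕ)) / D = ((B - A : ℕ) : ℚ) / D := by
    rw [Nat.cast_sub hAB]; field_simp; simp
  have : |((#{n ∈ Ico A B | n ≡ 0 [MOD D]} : ℕ) : ℚ) - ((B - A : ℕ) : ℚ) / D| ≤ 1 := by
    rw [abs_le]; constructor <;> linarith
  have h6 : (((|((#{n ∈ Ico A B | n ≡ 0 [MOD D]} : ℕ) : ℚ) - ((B - A : ℕ) : ℚ) / D| : ℚ)) : ℝ) ≤ ((1 : ℚ) : ℝ) := by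
    exact_mod_cast this
  push_cast at h6
  exact h6

lemma btS_pos (N : ℕ) (hN : 1 ≤ N) : 0 < btS N := by
  unfold btS
  have h := Finset.single_le_sum (f := btH) (fun f _ => btH_nonneg f) (Finset.mem_Icc.2 ⟨le_refl 1, hN⟩)
  have h1 : btH 1 = 1 := by simp [btH]
  linarith

open Finset in
/-- Selberg upper bound sieve for primes in an interval. -/
lemma bt_sieve (N A B : ℕ) (hN : 1 ≤ N) (hAB : A ≤ B) :
    ((#{n ∈ Ico A B | n.Prime ∧ N < n} : ℕ) : ℝ) ≤ ((B - A : ℕ) : ℝ) / btS N + (N : ℝ) ^ 2 := by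
  have hS := btS_pos N hN
  have lower : btS N ^ 2 * ((#{n ∈ Ico A B | n.Prime ∧ N < n} : ℕ) : ℝ) ≤
      ∑ n ∈ Ico A B, (∑ d ∈ Icc 1 N, if d ∣ n then btL N d else 0) ^ 2 := by
    rw [← sum_filter_add_sum_filter_not (Ico A B) (fun n => n.Prime ∧ N < n)]
    have : ∑ n ∈ Ico A B with (n.Prime ∧ N < n), (∑ d ∈ Icc 1 N, if d ∣ n then btL N d else 0) ^ 2
        = ∑ n ∈ Ico A B with (n.Prime ∧ N < n), btS N ^ 2 := by
      apply sum_congr rfl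
      intro n hn
      simp only [mem_filter] at hn
      congr 1
      rw [← btL_one N, sum_eq_single 1]
      · simp
      · intro d hd hd1
        rw [mem_Icc] at hd
        rw [if_neg]
        intro h
        rcases (Nat.dvd_prime hn.2.1).1 h with h | h <;> omega
      · intro h; exact absurd (mem_Icc.2 ⟨le_refl 1, hN⟩) h
    rw [this, sum_const, nsmul_eq_mul, mul_comm]
    have : 0 ≤ ∑ n ∈ Ico A B with ¬ (n.Prime ∧ N < n), (∑ d ∈ Icc 1 N, if d ∣ n then btL N d else 0) ^ 2 :=
      sum_nonneg (fun _ _ => sq_nonneg _)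
    linarith
  have expand : ∑ n ∈ Ico A B, (∑ d ∈ Icc 1 N, if d ∣ n then btL N d else 0) ^ 2 =
      ∑ d ∈ Icc 1 N, ∑ e ∈ Icc 1 N, btL N d * btL N e *
        ((#{n ∈ Ico A B | d.lcm e ∣ n} : ℕ) : ℝ) := by
    have h1 : ∀ n ∈ Ico A B, (∑ d ∈ Icc 1 N, if d ∣ n then btL N d else 0) ^ 2 =
        ∑ d ∈ Icc 1 N, ∑ e ∈ Icc 1 N, btL N d * btL N e * (if d.lcm e ∣ n then 1 else 0) := by
      intro n _
      rw [sq, sum_mul_sum]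
      apply sum_congr rfl; intro d _; apply sum_congr rfl; intro e _
      by_cases ha : d ∣ n <;> by_cases hb : e ∣ n <;> simp [ha, hb, Nat.lcm_dvd_iff]
    rw [sum_congr rfl h1, sum_comm]
    apply sum_congr rfl; intro d _
    rw [sum_comm]
    apply sum_congr rfl; intro e _
    rw [← mul_sum, sum_boole]
  have upper : ∑ d ∈ Icc 1 N, ∑ e ∈ Icc 1 N, btL N d * btL N e *
        ((#{n ∈ Ico A B | d.lcm e ∣ n} : ℕ) : ℝ) ≤
      ((B - A : ℕ) : ℝ) * btS N + (N : ℝ) ^ 2 * btS N ^ 2 := by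
    have h1 : ∀ d ∈ Icc 1 N, ∀ e ∈ Icc 1 N, btL N d * btL N e *
        ((#{n ∈ Ico A B | d.lcm e ∣ n} : ℕ) : ℝ) ≤
        ((B - A : ℕ) : ℝ) * (btL N d * btL N e / ((d.lcm e : ℕ) : ℝ)) + btS N ^ 2 := by
      intro d hd e he
      rw [mem_Icc] at hd he
      have hc := bt_count A B (d.lcm e) hAB (Nat.lcm_pos (by omega) (by omega))
      have h2 : |btL N d * btL N e| ≤ btS N ^ 2 := by
        rw [abs_mul, sq]
        exact mul_le_mul (btL_abs N d) (btL_abs N e) (abs_nonneg _) hS.le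
      have h3 := le_abs_self ((btL N d * btL N e) * (((#{n ∈ Ico A B | d.lcm e ∣ n} : ℕ) : ℝ) - ((B - A : ℕ) : ℝ) / ((d.lcm e : ℕ) : ℝ)))
      rw [abs_mul] at h3
      have h4 := mul_le_mul h2 hc (abs_nonneg _) (by positivity)
      have h5 : ((B - A : ℕ) : ℝ) * (btL N d * btL N e / ((d.lcm e : ℕ) : ℝ)) =
        (btL N d * btL N e) * (((B - A : ℕ) : ℝ) / ((d.lcm e : ℕ) : ℝ)) := by ring
      rw [h5]
      linarith
    refine (sum_le_sum (fun d hd => sum_le_sum (h1 d hd))).trans ?_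
    simp only [sum_add_distrib, ← mul_sum, bt_quad, sum_const, Nat.card_Icc, nsmul_eq_mul]
    simp only [Nat.add_sub_cancel]
    apply le_of_eq; ring
  have h := lower.trans (expand.le.trans upper)
  rw [← sub_nonneg] at h ⊢
  have h7 : ((B - A : ℕ) : ℝ) / btS N + (N : ℝ) ^ 2 - ((#{n ∈ Ico A B | n.Prime ∧ N < n} : ℕ) : ℝ)
    = (((B - A : ℕ) : ℝ) * btS N + (N : ℝ) ^ 2 * btS N ^ 2 -
      btS N ^ 2 * ((#{n ∈ Ico A B | n.Prime ∧ N < n} : ℕ) : ℝ)) / btS N ^ 2 := by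
    field_simp
  rw [h7]; positivity

open Finset in
lemma bt_fiber (N d : ℕ) (hd : Squarefree d) :
    ∑ n ∈ Icc 1 N with (∏ p ∈ n.primeFactors, p) = d, ((n : ℝ))⁻¹ ≤ 1 / (d.totient : ℝ) := by
  have hd0 : d ≠ 0 := hd.ne_zero
  let F : ℕ →* ℝ := ⟨⟨fun n => ((n : ℝ))⁻¹, by simp⟩, by intro a b; simp [mul_comm]⟩
  have hF : ∀ n, F n = ((n : ℝ))⁻¹ := fun n => rfl
  obtain ⟨_, hsum⟩ := EulerProduct.summable_and_hasSum_factoredNumbers_prod_filter_prime_geometric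
    (f := F) (by
      intro p hp
      rw [hF, Real.norm_eq_abs, abs_of_nonneg (by positivity)]
      exact inv_lt_one_of_one_lt₀ (by exact_mod_cast hp.one_lt)) d.primeFactors
  have hdprod := Nat.prod_primeFactors_of_squarefree hd
  have htot : (1 : ℝ) / d.totient = (d : ℝ)⁻¹ * ∏ p ∈ d.primeFactors with p.Prime, (1 - F p)⁻¹ := by
    have h := Nat.totient_eq_mul_prod_factors d
    have h' : (d.totient : ℝ) = d * ∏ p ∈ d.primeFactors, (1 - (p : ℝ)⁻¹) := by
      have := congrArg (fun q : ℚ => (q : ℝ)) h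
      push_cast at this
      exact this
    rw [filter_true_of_mem (fun p hp => Nat.prime_of_mem_primeFactors hp), h', prod_inv_distrib,
      one_div, mul_inv]
    rfl
  rw [htot]
  have key : ∀ n ∈ (Icc 1 N).filter (fun n => (∏ p ∈ n.primeFactors, p) = d),
      d ∣ n ∧ n / d ∈ Nat.factoredNumbers d.primeFactors := by
    intro n hn
    simp only [mem_filter, mem_Icc] at hn
    have hdn : d ∣ n := hn.2 ▸ Nat.prod_primeFactors_dvd n
    have hpf : d.primeFactors = n.primeFactors := by
      rw [← hn.2]
      exact Nat.primeFactors_prod (fun p hp => Nat.prime_of_mem_primeFactors hp)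
    refine ⟨hdn, ?_⟩
    rw [Nat.mem_factoredNumbers]
    have hne : n / d ≠ 0 := (Nat.div_pos (Nat.le_of_dvd (by omega) hdn) (by omega)).ne'
    refine ⟨hne, ?_⟩
    intro p hp
    rw [hpf]
    have h1 := Nat.prime_of_mem_primeFactorsList hp
    have h2 := Nat.dvd_of_mem_primeFactorsList hp
    exact Nat.mem_primeFactors.2 ⟨h1, h2.trans (Nat.div_dvd_of_dvd hdn), by omega⟩
  have hs : ∑ n ∈ Icc 1 N with (∏ p ∈ n.primeFactors, p) = d, ((n : ℝ))⁻¹ =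
      (d : ℝ)⁻¹ * ∑ n ∈ ((Icc 1 N).filter (fun n => (∏ p ∈ n.primeFactors, p) = d)).attach,
        F ((⟨n.1 / d, (key n.1 n.2).2⟩ : Nat.factoredNumbers d.primeFactors) : ℕ) := by
    rw [← sum_attach, mul_sum]
    apply sum_congr rfl
    intro n _
    rw [hF]
    obtain ⟨t, ht⟩ := (key n.1 n.2).1
    simp only
    rw [ht, Nat.mul_div_cancel_left _ (by omega)]
    push_cast
    rw [mul_inv]
  rw [hs]
  apply mul_le_mul_of_nonneg_left _ (by positivity)
  have himg := sum_image (s := ((Icc 1 N).filter (fun n => (∏ p ∈ n.primeFactors, p) = d)).attach)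
    (f := fun m : Nat.factoredNumbers d.primeFactors => F (m : ℕ))
    (g := fun n => (⟨n.1 / d, (key n.1 n.2).2⟩ : Nat.factoredNumbers d.primeFactors)) (by
      intro a _ b _ hab
      have h := congrArg Subtype.val hab
      simp only at h
      exact Subtype.ext ((Nat.div_left_inj (key a.1 a.2).1 (key b.1 b.2).1).1 h))
  refine himg.symm.le.trans ?_
  exact sum_le_hasSum _ (fun m _ => by rw [hF]; positivity) hsum

open Finset in
lemma btS_ge_harmonic (N : ℕ) : (harmonic N : ℝ) ≤ btS N := by
  rw [harmonic_eq_sum_Icc]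
  push_cast
  rw [← sum_fiberwise_of_maps_to (s := Icc 1 N) (t := Icc 1 N)
    (g := fun n => ∏ p ∈ n.primeFactors, p)]
  · unfold btS
    apply sum_le_sum
    intro d _
    by_cases hd : Squarefree d
    · unfold btH
      rw [if_pos hd]
      exact bt_fiber N d hd
    · apply le_trans _ (by unfold btH; split_ifs <;> positivity)
      apply le_of_eq
      apply sum_eq_zero
      intro n hn
      simp only [mem_filter] at hn
      exfalso; apply hd
      rw [← hn.2]
      apply Finset.squarefree_prod_of_pairwise_isCoprime
      · intro a ha b hb hab
        simp only [Function.onFun]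
        exact Nat.coprime_iff_isRelPrime.1 ((Nat.coprime_primes (Nat.prime_of_mem_primeFactors ha)
          (Nat.prime_of_mem_primeFactors hb)).2 hab)
      · intro a ha
        exact (Nat.prime_of_mem_primeFactors ha).prime.squarefree
  · intro n hn
    rw [mem_Icc] at hn ⊢
    have h := Nat.prod_primeFactors_dvd n
    exact ⟨Nat.pos_of_dvd_of_pos h (by omega), (Nat.le_of_dvd (by omega) h).trans hn.2⟩

lemma btS_ge_log (N : ℕ) (hN : 6 ≤ N) : Real.log (N + 1) + 1 / 2 ≤ btS N := by
  have h1 := Real.strictMono_eulerMascheroniSeq.monotone hN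
  have h2 := Real.one_half_lt_eulerMascheroniSeq_six
  have h3 := btS_ge_harmonic N
  have h4 := h2.trans_le h1
  unfold Real.eulerMascheroniSeq at h4
  linarith

lemma bt_abel (w f : ℕ → ℝ) (V R : ℝ) (hw : ∀ k, w (k + 1) ≤ w k) (hw0 : ∀ k, 0 ≤ w k) (n : ℕ)
    (h : ∀ l ≤ n, ∑ k ∈ Finset.range l, f k ≤ V * l + R) :
    ∑ k ∈ Finset.range n, w k * f k ≤ V * ∑ k ∈ Finset.range n, w k + R * w 0 := by
  have key : ∀ l ≤ n, ∑ k ∈ Finset.range l, w k * f k ≤ V * ∑ k ∈ Finset.range l, w k + R * w 0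
      - w l * (R + V * l - ∑ k ∈ Finset.range l, f k) := by
    intro l
    induction l with
    | zero => intro _; simp; linarith
    | succ l ih =>
      intro hl
      have h1 := ih (by omega)
      have h2 := h (l + 1) hl
      rw [Finset.sum_range_succ] at h2
      simp only [Finset.sum_range_succ]
      push_cast at h2 ⊢
      nlinarith [hw l]
  have h1 := key n le_rfl
  have h2 := h n le_rfl
  nlinarith [hw0 n]

lemma bt_half (y : ℝ) (hy : 0 < y) : 1 / (y + 1 / 2) ≤ Real.log ((y + 1) / y) := by
  have h := Real.le_log_one_add_of_nonneg (x := 1 / y) (by positivity)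
  have e1 : 2 * (1 / y) / (1 / y + 2) = 1 / (y + 1 / 2) := by field_simp; ring
  have e2 : 1 + 1 / y = (y + 1) / y := by field_simp
  rwa [e1, e2] at h

lemma bt_half_sum (a n : ℕ) (ha : 0 < a) :
    ∑ i ∈ Finset.range n, (1 : ℝ) / (((a + i : ℕ) : ℝ) + 1 / 2) ≤ Real.log (((a + n : ℕ) : ℝ) / a) := by
  have ha' : (0 : ℝ) < a := by exact_mod_cast ha
  induction n with
  | zero => simp [ha'.ne']
  | succ n ih =>
    rw [Finset.sum_range_succ]
    have hpos : (0 : ℝ) < ((a + n : ℕ) : ℝ) := by positivity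
    have h := bt_half _ hpos
    have e : Real.log (((a + (n + 1) : ℕ) : ℝ) / a) = Real.log (((a + n : ℕ) : ℝ) / a)
        + Real.log ((((a + n : ℕ) : ℝ) + 1) / ((a + n : ℕ) : ℝ)) := by
      rw [← Real.log_mul (by positivity) (by positivity)]
      congr 1
      push_cast
      field_simp
      ring
    rw [e]; linarith

/-- Indicator of the primes `m - k` with `2 * k < m`. -/
noncomputable def btF (m k : ℕ) : ℝ := if 2 * k < m ∧ (m - k).Prime then 1 else 0

/-- The weights. -/
noncomputable def btW (k : ℕ) : ℝ := 1 / ((k : ℝ) + 1 / 2)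

/-- Partial sums. -/
noncomputable def btG (m n : ℕ) : ℝ := ∑ k ∈ Finset.range n, btW k * btF m k

lemma btF_nonneg (m k : ℕ) : 0 ≤ btF m k := by unfold btF; split_ifs <;> norm_num
lemma btW_pos (k : ℕ) : 0 < btW k := by unfold btW; positivity
lemma btW_anti (k : ℕ) : btW (k + 1) ≤ btW k := by
  unfold btW; push_cast; gcongr; linarith

lemma btG_mono (m : ℕ) {a b : ℕ} (h : a ≤ b) : btG m a ≤ btG m b := by
  unfold btG
  apply Finset.sum_le_sum_of_subset_of_nonneg
  · exact Finset.range_mono h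
  · intro k _ _
    exact mul_nonneg (btW_pos k).le (btF_nonneg m k)

lemma bt_window_dec : ∀ r < 30, ∑ k ∈ Finset.range 30,
    (if Nat.Coprime 30 (r + 30 - k) then (2 : ℚ) / (2 * k + 1) else 0) ≤ 1284699552 / 444215525 := by
  decide +kernel

lemma bt_small_dec : ∀ m < 10, 3 ≤ m → ∑ k ∈ Finset.range 30,
    (if 2 * k < m ∧ (m - k).Prime then (2 : ℚ) / (2 * k + 1) else 0) ≤ 1284699552 / 444215525 := by
  decide +kernel

lemma btF_coprime (m k : ℕ) (hm : 10 ≤ m) (h : 2 * k < m ∧ (m - k).Prime) :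
    Nat.Coprime 30 (m - k) := by
  have h5 : 5 < m - k := by omega
  have : Nat.Coprime (m - k) 30 := by
    rw [Nat.Prime.coprime_iff_not_dvd h.2]
    intro hd
    have h30 : m - k ∣ 2 * (3 * 5) := by simpa using hd
    have := h.2
    rcases (Nat.Prime.dvd_mul this).1 h30 with h1 | h1
    · have := Nat.le_of_dvd (by norm_num) h1; omega
    · rcases (Nat.Prime.dvd_mul this).1 h1 with h1 | h1
      · have := Nat.le_of_dvd (by norm_num) h1; omega
      · have := Nat.le_of_dvd (by norm_num) h1; omega
  exact this.symm

lemma bt_coprime_shift (a b : ℕ) (h : a % 30 = b % 30) (hc : Nat.Coprime 30 a) :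
    Nat.Coprime 30 b := by
  unfold Nat.Coprime at *
  rw [Nat.gcd_rec] at hc ⊢
  rwa [← h]

lemma btW_eq (k : ℕ) : btW k = 2 / (2 * k + 1) := by
  unfold btW; field_simp

lemma bt_first (m : ℕ) (hm : 3 ≤ m) : btG m 30 ≤ 1284699552 / 444215525 := by
  by_cases h10 : m < 10
  · have h := bt_small_dec m h10 hm
    have h' : ((∑ k ∈ Finset.range 30,
      (if 2 * k < m ∧ (m - k).Prime then (2 : ℚ) / (2 * k + 1) else 0) : ℚ) : ℝ)
        ≤ ((1284699552 / 444215525 : ℚ) : ℝ) := by exact_mod_cast h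
    push_cast at h'
    refine le_trans (le_of_eq ?_) h'
    unfold btG
    apply Finset.sum_congr rfl
    intro k _
    rw [btW_eq]; unfold btF
    split_ifs <;> simp
  · have h := bt_window_dec (m % 30) (Nat.mod_lt _ (by norm_num))
    have h' : ((∑ k ∈ Finset.range 30,
      (if Nat.Coprime 30 (m % 30 + 30 - k) then (2 : ℚ) / (2 * k + 1) else 0) : ℚ) : ℝ)
        ≤ ((1284699552 / 444215525 : ℚ) : ℝ) := by exact_mod_cast h
    push_cast at h'
    refine le_trans ?_ h'
    unfold btG
    apply Finset.sum_le_sum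
    intro k hk
    rw [Finset.mem_range] at hk
    rw [btW_eq]; unfold btF
    by_cases hc : 2 * k < m ∧ (m - k).Prime
    · have hcop := btF_coprime m k (by omega) hc
      rw [if_pos hc, if_pos (bt_coprime_shift _ _ (by omega) hcop)]
      simp
    · rw [if_neg hc, mul_zero]
      split_ifs <;> positivity

open Finset in
lemma bt_window_card (m i : ℕ) (hm : 10 ≤ m) :
    ∑ k ∈ Ico (30 * i) (30 * i + 30), btF m k ≤ 8 := by
  unfold btF
  rw [sum_boole]
  have h8 : #{n ∈ Ico (m + 1) (m + 1 + 30) | Nat.Coprime 30 n} = 8 := by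
    rw [Nat.filter_coprime_Ico_eq_totient]; decide +kernel
  have : #{k ∈ Ico (30 * i) (30 * i + 30) | 2 * k < m ∧ (m - k).Prime} ≤ 8 := by
    rw [← h8]
    apply card_le_card_of_injOn (fun k => m + 30 * (i + 1) - k)
    · intro k hk
      simp only [coe_filter, mem_Ico, Set.mem_ofPred_eq] at hk ⊢
      have hcop := btF_coprime m k hm hk.2
      exact ⟨by omega, bt_coprime_shift _ _ (by omega) hcop⟩
    · intro a ha b hb hab
      simp only [coe_filter, mem_Ico, Set.mem_ofPred_eq] at ha hb hab
      omega
  exact_mod_cast this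

lemma bt_wheel (m M : ℕ) (hm : 3 ≤ m) (hM : 10 ≤ m) :
    btG m (30 * (M + 1)) ≤ 1284699552 / 444215525 + 4 / 15 * (harmonic M : ℝ) := by
  induction M with
  | zero => simpa using bt_first m hm
  | succ M ih =>
    have e : btG m (30 * (M + 1 + 1)) = btG m (30 * (M + 1)) +
        ∑ k ∈ Finset.Ico (30 * (M + 1)) (30 * (M + 1) + 30), btW k * btF m k := by
      unfold btG
      rw [Finset.sum_range_add_sum_Ico _ (by omega)]
      rfl
    have h1 : ∑ k ∈ Finset.Ico (30 * (M + 1)) (30 * (M + 1) + 30), btW k * btF m k ≤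
        ∑ k ∈ Finset.Ico (30 * (M + 1)) (30 * (M + 1) + 30), (1 / (30 * ((M : ℝ) + 1))) * btF m k := by
      apply Finset.sum_le_sum
      intro k hk
      rw [Finset.mem_Ico] at hk
      apply mul_le_mul_of_nonneg_right _ (btF_nonneg m k)
      unfold btW
      apply one_div_le_one_div_of_le (by positivity)
      have : ((30 * (M + 1) : ℕ) : ℝ) ≤ k := by exact_mod_cast hk.1
      push_cast at this
      linarith
    rw [← Finset.mul_sum] at h1
    have h2 := mul_le_mul_of_nonneg_left (bt_window_card m (M + 1) hM)
      (by positivity : (0 : ℝ) ≤ 1 / (30 * ((M : ℝ) + 1)))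
    have h3 : (harmonic (M + 1) : ℝ) = harmonic M + 1 / ((M : ℝ) + 1) := by
      rw [harmonic_succ]; push_cast; simp
    have h4 : 1 / (30 * ((M : ℝ) + 1)) * 8 = 4 / 15 * (1 / ((M : ℝ) + 1)) := by
      field_simp; norm_num
    rw [e, h3]
    linarith

open Finset in
lemma bt_block (m a n N : ℕ) (ha : 0 < a) (hN : 1 ≤ N) (hNa : N ≤ a) :
    btG m (a + n) ≤ btG m a + Real.log (((a + n : ℕ) : ℝ) / a) / btS N + (N : ℝ) ^ 2 / a := by
  have hS := btS_pos N hN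
  have ha' : (0 : ℝ) < a := by exact_mod_cast ha
  have e : btG m (a + n) = btG m a + ∑ i ∈ range n, btW (a + i) * btF m (a + i) := by
    unfold btG; rw [sum_range_add]
  have hcount : ∀ l ≤ n, ∑ i ∈ range l, btF m (a + i) ≤ 1 / btS N * l + (N : ℝ) ^ 2 := by
    intro l _
    have h1 := bt_sieve N (m + 1 - (a + l)) (m + 1 - a) hN (by omega)
    have h2 : ∑ i ∈ range l, btF m (a + i) ≤
        ((#{n ∈ Ico (m + 1 - (a + l)) (m + 1 - a) | n.Prime ∧ N < n} : ℕ) : ℝ) := by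
      unfold btF
      rw [sum_boole]
      have : #{i ∈ range l | 2 * (a + i) < m ∧ (m - (a + i)).Prime} ≤
          #{n ∈ Ico (m + 1 - (a + l)) (m + 1 - a) | n.Prime ∧ N < n} := by
        apply card_le_card_of_injOn (fun i => m - (a + i))
        · intro i hi
          simp only [coe_filter, mem_Ico, mem_range, Set.mem_ofPred_eq] at hi ⊢
          exact ⟨by omega, hi.2.2, by omega⟩
        · intro i hi i' hi' hab
          simp only [coe_filter, mem_range, Set.mem_ofPred_eq] at hi hi' hab
          omega
      exact_mod_cast this
    have h3 : ((m + 1 - a - (m + 1 - (a + l)) : ℕ) : ℝ) ≤ l := by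
      exact_mod_cast (by omega : m + 1 - a - (m + 1 - (a + l)) ≤ l)
    have h4 : ((m + 1 - a - (m + 1 - (a + l)) : ℕ) : ℝ) / btS N ≤ l / btS N := by gcongr
    have h5 : (l : ℝ) / btS N = 1 / btS N * l := by ring
    linarith
  have habel := bt_abel (fun i => btW (a + i)) (fun i => btF m (a + i)) (1 / btS N) ((N : ℝ) ^ 2)
    (fun k => btW_anti (a + k)) (fun k => (btW_pos _).le) n hcount
  have hsum : ∑ i ∈ range n, btW (a + i) ≤ Real.log (((a + n : ℕ) : ℝ) / a) :=
    bt_half_sum a n ha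
  have h6 : 1 / btS N * ∑ i ∈ range n, btW (a + i) ≤ Real.log (((a + n : ℕ) : ℝ) / a) / btS N := by
    rw [one_div_mul_eq_div]; gcongr
  have h7 : (N : ℝ) ^ 2 * btW (a + 0) ≤ (N : ℝ) ^ 2 / a := by
    rw [div_eq_mul_one_div]
    unfold btW
    gcongr
    simp
  rw [e]; linarith

lemma bt_tri (j : ℕ) : 2 * (∑ i ∈ Finset.range (j + 1), i) = j * (j + 1) := by
  have := Finset.sum_range_id_mul_two (j + 1)
  rw [Nat.add_sub_cancel] at this
  linarith

/-- Triangular numbers. -/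
def btT (j : ℕ) : ℕ := ∑ i ∈ Finset.range (j + 1), i

lemma btT_succ (j : ℕ) : btT (j + 1) = btT j + (j + 1) := by
  unfold btT; rw [Finset.sum_range_succ]

lemma btT_real (j : ℕ) : (btT j : ℝ) = j * (j + 1) / 2 := by
  have h := bt_tri j
  have : (2 : ℝ) * btT j = j * (j + 1) := by unfold btT; exact_mod_cast h
  linarith

lemma bt_sieve_block (m j : ℕ) (hj : 6 ≤ j) :
    btG m (2 ^ btT (j + 1)) ≤ btG m (2 ^ btT j) + 4 / ((j : ℝ) - 1)
      + 1 / 2 * (7072 / 10000) ^ (j + 1) := by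
  have hj' : (6 : ℝ) ≤ j := by exact_mod_cast hj
  have hl2 := Real.log_two_gt_d9
  have hl2' := Real.log_two_lt_d9
  have he := Real.exp_one_gt_d9
  have he' := Real.exp_one_lt_d9
  set z : ℝ := Real.exp ((((j : ℝ) ^ 2 - 1) / 4) * Real.log 2 - 1 / 2) with hz
  set N := ⌊z⌋₊ with hN
  have hz6 : (6 : ℝ) ≤ z := by
    have h1 : (5 : ℝ) ≤ (((j : ℝ) ^ 2 - 1) / 4) * Real.log 2 - 1 / 2 := by nlinarith
    have h2 := Real.add_one_le_exp ((((j : ℝ) ^ 2 - 1) / 4) * Real.log 2 - 1 / 2)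
    linarith
  have hN6 : 6 ≤ N := Nat.le_floor (by exact_mod_cast hz6)
  have hNz : (N : ℝ) ≤ z := Nat.floor_le (by positivity)
  have hzN : z < N + 1 := Nat.lt_floor_add_one z
  have hpow : ((2 ^ btT j : ℕ) : ℝ) = Real.exp ((j : ℝ) * (j + 1) / 2 * Real.log 2) := by
    rw [← btT_real, Real.exp_nat_mul, Real.exp_log (by norm_num)]; push_cast; rfl
  have hrem : (N : ℝ) ^ 2 / ((2 ^ btT j : ℕ) : ℝ) ≤ 1 / 2 * (7072 / 10000) ^ (j + 1) := by
    have h1 : (N : ℝ) ^ 2 ≤ z ^ 2 := by gcongr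
    have h2 : z ^ 2 / ((2 ^ btT j : ℕ) : ℝ) = Real.exp (-1) * Real.exp (- (1 / 2 * Real.log 2)) ^ (j + 1) := by
      rw [hpow, hz, ← Real.exp_nat_mul, ← Real.exp_nat_mul, ← Real.exp_sub, ← Real.exp_add]
      congr 1; push_cast; ring
    have h3 : Real.exp (-1) ≤ 1 / 2 := by
      rw [Real.exp_neg, inv_le_comm₀ (by positivity) (by norm_num)]
      linarith
    have h4 : Real.exp (- (1 / 2 * Real.log 2)) ≤ 7072 / 10000 := by
      have h5 : Real.exp (- (1 / 2 * Real.log 2)) ^ 2 = 1 / 2 := by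
        rw [← Real.exp_nat_mul]
        rw [show ((2 : ℕ) : ℝ) * (-(1 / 2 * Real.log 2)) = - Real.log 2 by push_cast; ring,
          Real.exp_neg, Real.exp_log (by norm_num)]; norm_num
      have h6 := Real.exp_pos (- (1 / 2 * Real.log 2))
      nlinarith
    calc (N : ℝ) ^ 2 / ((2 ^ btT j : ℕ) : ℝ) ≤ z ^ 2 / ((2 ^ btT j : ℕ) : ℝ) := by gcongr
      _ = _ := h2
      _ ≤ _ := by gcongr
  have hNa : N ≤ 2 ^ btT j := by
    have h1 : (N : ℝ) ^ 2 / ((2 ^ btT j : ℕ) : ℝ) ≤ 1 := by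
      refine hrem.trans ?_
      have : (7072 / 10000 : ℝ) ^ (j + 1) ≤ 1 := pow_le_one₀ (by norm_num) (by norm_num)
      linarith
    rw [div_le_one (by positivity)] at h1
    have h2 : N ^ 2 ≤ 2 ^ btT j := by exact_mod_cast h1
    nlinarith
  have hS : ((j : ℝ) ^ 2 - 1) / 4 * Real.log 2 ≤ btS N := by
    have h1 := btS_ge_log N hN6
    have h2 : Real.log z ≤ Real.log (N + 1) := Real.log_le_log (by positivity) hzN.le
    rw [hz, Real.log_exp] at h2
    linarith
  have hb := bt_block m (2 ^ btT j) (2 ^ btT (j + 1) - 2 ^ btT j) N (by positivity) (by omega) hNa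
  have hle : 2 ^ btT j ≤ 2 ^ btT (j + 1) :=
    Nat.pow_le_pow_right (by norm_num) (by rw [btT_succ]; omega)
  rw [Nat.add_sub_cancel' hle] at hb
  have hlog : Real.log (((2 ^ btT (j + 1) : ℕ) : ℝ) / ((2 ^ btT j : ℕ) : ℝ)) = (j + 1) * Real.log 2 := by
    rw [btT_succ, pow_add]
    push_cast
    rw [mul_div_cancel_left₀ _ (by positivity), Real.log_pow]
    push_cast; ring
  rw [hlog] at hb
  have hmain : (j + 1) * Real.log 2 / btS N ≤ 4 / ((j : ℝ) - 1) := by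
    have hpos : 0 < ((j : ℝ) ^ 2 - 1) / 4 * Real.log 2 := by
      apply mul_pos <;> nlinarith
    refine (div_le_div_of_nonneg_left (by positivity) hpos hS).trans (le_of_eq ?_)
    have h1 : (j : ℝ) - 1 ≠ 0 := by linarith
    have h2 : (j : ℝ) + 1 ≠ 0 := by linarith
    have h3 : (j : ℝ) ^ 2 - 1 = (j - 1) * (j + 1) := by ring
    rw [h3]
    field_simp
  linarith

lemma bt_sieve_total (m J : ℕ) (hJ : 5 ≤ J) :
    btG m (2 ^ btT (J + 1)) ≤ btG m (2 ^ 21) + 4 * Real.log (((J : ℝ) - 1 / 2) / (9 / 2))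
      + 625 / 366 * ((7072 / 10000) ^ 7 - (7072 / 10000) ^ (J + 2)) := by
  induction J, hJ using Nat.le_induction with
  | base =>
    have : btT (5 + 1) = 21 := by decide
    rw [this]; norm_num
  | succ J hJ ih =>
    have h := bt_sieve_block m (J + 1) (by omega)
    have hJ' : (5 : ℝ) ≤ J := by exact_mod_cast hJ
    have h2 := bt_half ((J : ℝ) - 1 / 2) (by linarith)
    have h3 : Real.log ((((J + 1 : ℕ) : ℝ) - 1 / 2) / (9 / 2)) =
        Real.log (((J : ℝ) - 1 / 2) / (9 / 2)) + Real.log (((J : ℝ) - 1 / 2 + 1) / ((J : ℝ) - 1 / 2)) := by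
      have h0 : (0 : ℝ) < (J : ℝ) - 1 / 2 := by linarith
      rw [← Real.log_mul (by positivity) (by positivity)]
      congr 1
      rw [div_mul_div_comm, mul_comm (9 / 2 : ℝ), mul_div_mul_left _ _ h0.ne']
      push_cast
      ring
    have h4 : (4 : ℝ) / (((J + 1 : ℕ) : ℝ) - 1) = 4 * (1 / ((J : ℝ) - 1 / 2 + 1 / 2)) := by
      push_cast; ring_nf
    rw [h4] at h
    rw [h3]
    have h5 : (7072 / 10000 : ℝ) ^ (J + 1 + 2) = (7072 / 10000) * (7072 / 10000) ^ (J + 2) := by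
      ring
    have h6 : (7072 / 10000 : ℝ) ^ (J + 1 + 1) = (7072 / 10000) ^ (J + 2) := by ring
    rw [h6] at h
    rw [h5]
    linarith

lemma bt_case_small (m : ℕ) (hm : 3 ≤ m) (hK : (m + 1) / 2 ≤ 2 ^ 21) :
    btG m ((m + 1) / 2) ≤ 1284699552 / 444215525 + 2 * Real.log (Real.log ((m : ℝ) + 1 / 2)) := by
  have he := Real.exp_one_gt_d9
  have he' := Real.exp_one_lt_d9
  have hl2 := Real.log_two_gt_d9
  have hl2' := Real.log_two_lt_d9
  have hm' : (3 : ℝ) ≤ m := by exact_mod_cast hm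
  set M := (m + 1) / 2 / 30 with hM
  rcases Nat.eq_zero_or_pos M with h0 | hpos
  · have h1 : btG m ((m + 1) / 2) ≤ btG m 30 := btG_mono m (by omega)
    have h2 := bt_first m hm
    have h3 : 1 ≤ Real.log ((m : ℝ) + 1 / 2) := by
      rw [Real.le_log_iff_exp_le (by linarith)]; linarith
    have h4 := Real.log_nonneg h3
    linarith
  · have hMpos : (1 : ℝ) ≤ M := by exact_mod_cast hpos
    have h1 : btG m ((m + 1) / 2) ≤ btG m (30 * (M + 1)) := btG_mono m (by omega)
    have h2 := bt_wheel m M hm (by omega)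
    have h3 := harmonic_le_one_add_log M
    have hx : 59 * (M : ℝ) ≤ (m : ℝ) + 1 / 2 := by
      have : 59 * M ≤ m := by omega
      have : (59 : ℝ) * M ≤ m := by exact_mod_cast this
      linarith
    have hL0 : 0 ≤ Real.log M := Real.log_nonneg hMpos
    have hlog : 4 + Real.log M ≤ Real.log ((m : ℝ) + 1 / 2) := by
      have h5 : Real.log (59 * (M : ℝ)) ≤ Real.log ((m : ℝ) + 1 / 2) :=
        Real.log_le_log (by positivity) hx
      rw [Real.log_mul (by norm_num) (by positivity)] at h5
      have h6 : (4 : ℝ) ≤ Real.log 59 := by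
        rw [Real.le_log_iff_exp_le (by norm_num)]
        have : Real.exp 4 = Real.exp 1 ^ 4 := by rw [← Real.exp_nat_mul]; norm_num
        rw [this]
        calc Real.exp 1 ^ 4 ≤ (2.7182818286 : ℝ) ^ 4 := by gcongr
          _ ≤ 59 := by norm_num
      linarith
    have hL12 : Real.log M ≤ 12 := by
      have h5 : M ≤ 2 ^ 17 := by omega
      have h6 : (M : ℝ) ≤ 2 ^ 17 := by exact_mod_cast h5
      have h7 := Real.log_le_log (by positivity) h6
      rw [Real.log_pow] at h7
      push_cast at h7
      linarith
    have hfin : 4 / 15 * (1 + Real.log M) ≤ 2 * Real.log (Real.log ((m : ℝ) + 1 / 2)) := by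
      by_cases hc : Real.log M ≤ 9
      · have h5 : Real.log (2 ^ 2) ≤ Real.log (Real.log ((m : ℝ) + 1 / 2)) :=
          Real.log_le_log (by norm_num) (by linarith)
        rw [Real.log_pow] at h5
        push_cast at h5
        linarith
      · have h5 : Real.log (2 ^ 3) ≤ Real.log (Real.log ((m : ℝ) + 1 / 2)) :=
          Real.log_le_log (by norm_num) (by linarith)
        rw [Real.log_pow] at h5
        push_cast at h5
        linarith
    linarith

lemma bt_case_large (m : ℕ) (hK : 2 ^ 21 < (m + 1) / 2) :
    btG m ((m + 1) / 2) ≤ 1284699552 / 444215525 + 2 * Real.log (Real.log ((m : ℝ) + 1 / 2)) := by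
  have hl2 := Real.log_two_gt_d9
  have hl2' := Real.log_two_lt_d9
  have hex : ∃ J, (m + 1) / 2 ≤ 2 ^ btT (J + 1) := by
    refine ⟨(m + 1) / 2, ?_⟩
    have h1 : (m + 1) / 2 ≤ btT ((m + 1) / 2 + 1) := by rw [btT_succ]; omega
    exact h1.trans Nat.lt_two_pow_self.le
  classical
  set J := Nat.find hex with hJ
  have hJle : (m + 1) / 2 ≤ 2 ^ btT (J + 1) := Nat.find_spec hex
  have hTmono : Monotone btT := monotone_nat_of_le_succ (fun n => by rw [btT_succ]; omega)
  have hJ6 : 6 ≤ J := by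
    by_contra hcon
    have h1 : btT (J + 1) ≤ btT 6 := hTmono (by omega)
    have h2 : btT 6 = 21 := by decide
    rw [h2] at h1
    have := Nat.pow_le_pow_right (n := 2) (by norm_num) h1
    omega
  have hJlt : 2 ^ btT J < (m + 1) / 2 := by
    have := Nat.find_min hex (m := J - 1) (by omega)
    rw [show J - 1 + 1 = J by omega] at this
    omega
  have hJr : (6 : ℝ) ≤ J := by exact_mod_cast hJ6
  have h1 : btG m ((m + 1) / 2) ≤ btG m (2 ^ btT (J + 1)) := btG_mono m hJle
  have h2 := bt_sieve_total m J (by omega)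
  obtain ⟨Mw, hMw⟩ : ∃ M : ℕ, M = 69905 := ⟨_, rfl⟩
  have hMr : (Mw : ℝ) = 69905 := by rw [hMw]; norm_num
  have h3 : btG m (2 ^ 21) ≤ btG m (30 * (Mw + 1)) := btG_mono m (by omega)
  have h4 := bt_wheel m Mw (by omega) (by omega)
  have h5 := harmonic_le_one_add_log Mw
  have h6 : Real.log (Mw : ℝ) ≤ 21 * Real.log 2 - 17 / 5 := by
    have e1 : Real.log (Mw : ℝ) + 17 / 5 ≤ Real.log (2 ^ 21) := by
      rw [Real.le_log_iff_exp_le (by norm_num), Real.exp_add, Real.exp_log (by rw [hMr]; norm_num)]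
      have e2 : Real.exp (17 / 5) ≤ 29.999 := by
        have e3 : Real.exp (17 / 5) ^ 5 = Real.exp 1 ^ 17 := by
          rw [← Real.exp_nat_mul, ← Real.exp_nat_mul]; norm_num
        have e4 : Real.exp 1 ^ 17 ≤ (2.7182818286 : ℝ) ^ 17 := by
          have := Real.exp_one_lt_d9
          gcongr
        have e5 : Real.exp (17 / 5) ^ 5 ≤ (29.999 : ℝ) ^ 5 := by
          rw [e3]; exact e4.trans (by norm_num)
        exact le_of_pow_le_pow_left₀ (by norm_num) (by norm_num) e5
      calc (Mw : ℝ) * Real.exp (17 / 5) ≤ (Mw : ℝ) * 29.999 := by gcongr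
        _ ≤ 2 ^ 21 := by rw [hMr]; norm_num
    rw [Real.log_pow] at e1
    push_cast at e1 ⊢
    linarith
  have h7 : (0 : ℝ) ≤ (7072 / 10000) ^ (J + 2) := by positivity
  have h8 : (625 / 366 : ℝ) * (7072 / 10000) ^ 7 ≤ 0.16 := by norm_num
  -- lower bound for `log log x`
  have h9 : (btT J : ℝ) * Real.log 2 ≤ Real.log ((m : ℝ) + 1 / 2) := by
    rw [← Real.log_pow]
    apply Real.log_le_log (by positivity)
    have : 2 ^ btT J ≤ m := by omega
    have : (2 : ℝ) ^ btT J ≤ m := by exact_mod_cast this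
    linarith
  rw [btT_real] at h9
  have h10 : Real.log ((J : ℝ) * (J + 1) / 2 * Real.log 2) ≤ Real.log (Real.log ((m : ℝ) + 1 / 2)) :=
    Real.log_le_log (by positivity) h9
  have hJh : (0 : ℝ) < J - 1 / 2 := by linarith
  have h11 : Real.log (((J : ℝ) - 1 / 2) ^ 2 * (69 / 200)) ≤ Real.log ((J : ℝ) * (J + 1) / 2 * Real.log 2) := by
    apply Real.log_le_log (by positivity)
    have e1 : ((J : ℝ) - 1 / 2) ^ 2 ≤ (J : ℝ) * (J + 1) := by nlinarith
    nlinarith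
  rw [Real.log_mul (by positivity) (by norm_num), Real.log_pow] at h11
  rw [Real.log_div hJh.ne' (by norm_num)] at h2
  push_cast at h11
  -- numerical: `log 4.5` and `log 0.345`
  have h12 : (3 / 2 : ℝ) ≤ Real.log (9 / 2) := by
    rw [Real.le_log_iff_exp_le (by norm_num)]
    have e3 : Real.exp (3 / 2) ^ 2 = Real.exp 1 ^ 3 := by
      rw [← Real.exp_nat_mul, ← Real.exp_nat_mul]; norm_num
    have e4 : Real.exp 1 ^ 3 ≤ (2.7182818286 : ℝ) ^ 3 := by
      have := Real.exp_one_lt_d9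
      gcongr
    have e5 : Real.exp (3 / 2) ^ 2 ≤ (9 / 2 : ℝ) ^ 2 := by
      rw [e3]; exact e4.trans (by norm_num)
    exact le_of_pow_le_pow_left₀ (by norm_num) (by norm_num) e5
  have h13 : (-11 / 10 : ℝ) ≤ Real.log (69 / 200) := by
    rw [Real.le_log_iff_exp_le (by norm_num)]
    have e3 : Real.exp (-11 / 10) ^ 10 * Real.exp 1 ^ 11 = 1 := by
      rw [← Real.exp_nat_mul, ← Real.exp_nat_mul, ← Real.exp_add]; norm_num
    have e4 : (2.7182818283 : ℝ) ^ 11 ≤ Real.exp 1 ^ 11 := by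
      have := Real.exp_one_gt_d9
      gcongr
    have e5 : Real.exp (-11 / 10) ^ 10 ≤ (69 / 200 : ℝ) ^ 10 := by
      have e6 : 0 ≤ Real.exp (-11 / 10) ^ 10 := by positivity
      have e7 : Real.exp (-11 / 10) ^ 10 * (2.7182818283 : ℝ) ^ 11 ≤ 1 := by
        rw [← e3]; gcongr
      have e8 : 1 ≤ (69 / 200 : ℝ) ^ 10 * (2.7182818283 : ℝ) ^ 11 := by norm_num
      exact le_of_mul_le_mul_right (e7.trans e8) (by norm_num)
    exact le_of_pow_le_pow_left₀ (by norm_num) (by norm_num) e5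
  have h14 : (625 / 366 : ℝ) * ((7072 / 10000) ^ 7 - (7072 / 10000) ^ (J + 2)) ≤ 0.16 := by
    rw [mul_sub]
    exact (sub_le_self _ (by positivity)).trans h8
  clear_value J
  clear h7 h8 h9 hTmono hJle hJlt hMr hMw
  generalize (625 / 366 : ℝ) * ((7072 / 10000) ^ 7 - (7072 / 10000) ^ (J + 2)) = r at *
  generalize Real.log ((J : ℝ) - 1 / 2) = L at *
  generalize Real.log ((J : ℝ) * (J + 1) / 2 * Real.log 2) = L2 at *
  generalize Real.log (Real.log ((m : ℝ) + 1 / 2)) = L3 at *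
  generalize Real.log (69 / 200) = L4 at *
  generalize Real.log (9 / 2) = L5 at *
  generalize Real.log 2 = L6 at *
  linarith

/-- The lower sum over primes: `∑_{x/2 < p < x} 1/(x-p) ≤ C + 2 log log x`. -/
theorem lower_prime_sum_bound (x : ℝ)
    (hx : ∃ m : ℕ, 0 < m ∧ x = m + 1 / 2) (hx' : 3.5 ≤ x) :
    (∑' p : ℕ, if p.Prime ∧ x / 2 < (p : ℝ) ∧ (p : ℝ) < x then
        1 / (x - p) else 0)
    ≤ (1284699552 : ℝ) / 444215525 + 2 * Real.log (Real.log x) := by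
  obtain ⟨m, hm0, rfl⟩ := hx
  have hm : 3 ≤ m := by
    have : (3 : ℝ) ≤ m := by norm_num at hx'; linarith
    exact_mod_cast this
  have hsum : (∑' p : ℕ, if p.Prime ∧ ((m : ℝ) + 1 / 2) / 2 < (p : ℝ) ∧ (p : ℝ) < (m : ℝ) + 1 / 2 then
        1 / ((m : ℝ) + 1 / 2 - p) else 0) = btG m ((m + 1) / 2) := by
    rw [tsum_eq_sum (s := Finset.range (m + 1))]
    · rw [← Finset.sum_flip]
      unfold btG
      symm
      apply Finset.sum_subset_zero_on_sdiff (Finset.range_mono (by omega))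
      · intro k hk
        simp only [Finset.mem_sdiff, Finset.mem_range] at hk
        rw [if_neg]
        rintro ⟨_, h1, _⟩
        rw [Nat.cast_sub (by omega)] at h1
        have : (2 * k : ℝ) < m := by linarith
        have : 2 * k < m := by exact_mod_cast this
        omega
      · intro k hk
        rw [Finset.mem_range] at hk
        have hk2 : 2 * k < m := by omega
        have hk3 : 2 * (k : ℝ) + 1 ≤ m := by exact_mod_cast hk2
        have hk0 : (0 : ℝ) ≤ k := by positivity
        unfold btF btW
        rw [Nat.cast_sub (by omega : k ≤ m)]
        by_cases hp : (m - k).Prime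
        · rw [if_pos ⟨hk2, hp⟩, if_pos ⟨hp, by linarith, by linarith⟩, mul_one]
          congr 1; ring
        · rw [if_neg (by tauto), if_neg (by tauto), mul_zero]
    · intro p hp
      rw [Finset.mem_range, not_lt] at hp
      rw [if_neg]
      rintro ⟨_, _, h⟩
      have : ((m + 1 : ℕ) : ℝ) ≤ p := by exact_mod_cast hp
      push_cast at this
      linarith
  rw [hsum]
  by_cases hK : (m + 1) / 2 ≤ 2 ^ 21
  · exact bt_case_small m hm hK
  · exact bt_case_large m (by omega)
end
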